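/- arXiv:2011.02393 — 4 statements merged into one kernel-verified Lean document; each statement's English description precedes it below -/
import Mathlib

section
/- For every integer w ≥ 4, the weighted sum of triple T-values satisfies ∑_{a+b+c=w, a≥2, b,c≥1} 2^b (3^{a-1} − 1) · T(a,b,c) = (2/3)(w−1)(w−2) · T(w). -/
open Filter

/-- Depth-1 Euler sum `ζ(s; e) = ∑_{n ≥ 1} eⁿ / nˢ`,
defined as the limit of partial sums. `e = 1` gives `ζ(s)`, `e = -1` gives `ζ(s̄)`. -/
noncomputable def eulerSum1 (s : ℕ) (e : ℝ) : ℝ :=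
  limUnder atTop (fun N : ℕ =>
    ∑ n ∈ Finset.Icc 1 N, e ^ n / (n : ℝ) ^ s)

/-- Depth-2 Euler sum `ζ(s₁, s₂; e₁, e₂) = ∑_{n₁ > n₂ ≥ 1} e₁^{n₁} e₂^{n₂} / (n₁^{s₁} n₂^{s₂})`,
defined as the limit of iterated partial sums. A bar over an argument means the
corresponding sign is `-1`. -/
noncomputable def eulerSum2 (s₁ s₂ : ℕ) (e₁ e₂ : ℝ) : ℝ :=
  limUnder atTop (fun N : ℕ =>
    ∑ n₁ ∈ Finset.Icc 1 N, ∑ n₂ ∈ Finset.Ico 1 n₁,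
      e₁ ^ n₁ * e₂ ^ n₂ / ((n₁ : ℝ) ^ s₁ * (n₂ : ℝ) ^ s₂))

/-- Depth-3 Euler sum
`ζ(s₁, s₂, s₃; e₁, e₂, e₃) = ∑_{n₁ > n₂ > n₃ ≥ 1} e₁^{n₁} e₂^{n₂} e₃^{n₃} / (n₁^{s₁} n₂^{s₂} n₃^{s₃})`. -/
noncomputable def eulerSum3 (s₁ s₂ s₃ : ℕ) (e₁ e₂ e₃ : ℝ) : ℝ :=
  limUnder atTop (fun N : ℕ =>
    ∑ n₁ ∈ Finset.Icc 1 N, ∑ n₂ ∈ Finset.Ico 1 n₁, ∑ n₃ ∈ Finset.Ico 1 n₂,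
      e₁ ^ n₁ * e₂ ^ n₂ * e₃ ^ n₃ / ((n₁ : ℝ) ^ s₁ * (n₂ : ℝ) ^ s₂ * (n₃ : ℝ) ^ s₃))

/-- Depth-1 multiple T-value `T(s) = 2 ∑_{m odd, m ≥ 1} 1 / mˢ`. -/
noncomputable def tValue1 (s : ℕ) : ℝ :=
  limUnder atTop (fun N : ℕ =>
    ∑ m ∈ Finset.Icc 1 N, if m % 2 = 1 then 2 / (m : ℝ) ^ s else 0)

/-- Depth-2 multiple T-value
`T(s₁, s₂) = ∑_{m₁ > m₂ > 0, m₁ even, m₂ odd} 4 / (m₁^{s₁} m₂^{s₂})`. -/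
noncomputable def tValue2 (s₁ s₂ : ℕ) : ℝ :=
  limUnder atTop (fun N : ℕ =>
    ∑ m₁ ∈ Finset.Icc 1 N, ∑ m₂ ∈ Finset.Ico 1 m₁,
      if m₁ % 2 = 0 ∧ m₂ % 2 = 1 then 4 / ((m₁ : ℝ) ^ s₁ * (m₂ : ℝ) ^ s₂) else 0)

/-- Depth-3 multiple T-value
`T(s₁, s₂, s₃) = ∑_{m₁ > m₂ > m₃ > 0, m₁ odd, m₂ even, m₃ odd} 8 / (m₁^{s₁} m₂^{s₂} m₃^{s₃})`. -/
noncomputable def tValue3 (s₁ s₂ s₃ : ℕ) : ℝ :=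
  limUnder atTop (fun N : ℕ =>
    ∑ m₁ ∈ Finset.Icc 1 N, ∑ m₂ ∈ Finset.Ico 1 m₁, ∑ m₃ ∈ Finset.Ico 1 m₂,
      if m₁ % 2 = 1 ∧ m₂ % 2 = 0 ∧ m₃ % 2 = 1 then
        8 / ((m₁ : ℝ) ^ s₁ * (m₂ : ℝ) ^ s₂ * (m₃ : ℝ) ^ s₃) else 0)

/-
Put `s = 1 - t`. Expanding `1 / (m₁ - 3t) - 1 / (m₁ - t)`, `1 / (m₂ - 2t)` and `1 / (m₃ - t)` in
powers of `t` shows that the weighted sums of triple T-values are, up to constants, the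
coefficients of `H s = ∑ (1 / (2a + 3s) - 1 / (2a + 2 + s)) / ((2b + 2s) (2c + s))`, the sum running
over `a ≥ b ≥ c ≥ 0`. It therefore suffices to show
`6 * H s = ∑ 1 / (2i + s) ^ 3 - ∑ 1 / (2i + 1) ^ 3`.

The partial fraction rule `1 / (x y) = (1 / x + 1 / y) / (x + y)` turns the two halves of `H` into
symmetric sums over products of `x_i = 1 / (2i + s)`, and replacing `s` by `s + 2` only removes
`x_0`. In the difference of the halves everything involving `x_0` cancels except `x_0 ^ 3 / 6`, so
`H s = H (s + 2) + s⁻¹ ^ 3 / 6`. Hence `H s - H (s + 2n)` is a partial sum of the cubes, and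
it remains to find the limit of `H (s + 2n)`. The factor `2 (1 - s)` splits off `H s`, leaving a sum
that is antitone in `s`, so the limit does not depend on `s`; and it is known for `s = 1`,
where `H` vanishes.
-/

namespace TripleT

/-! ### Nested sums over a shifted lattice -/

/-- The sum of `1 / (2c + s)` over `c < n`. -/
noncomputable def nestedSum₁ (s : ℝ) (n : ℕ) : ℝ :=
  ∑ c ∈ Finset.range n, (2 * c + s)⁻¹

/-- The sum of `1 / ((2b + 2s) (2c + s))` over `c ≤ b < n`. -/
noncomputable def nestedSum₂ (s : ℝ) (n : ℕ) : ℝ :=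
  ∑ b ∈ Finset.range n, (2 * b + 2 * s)⁻¹ * nestedSum₁ s (b + 1)

/-- The sum of `1 / ((2a + 3s) (2b + 2s) (2c + s))` over `c ≤ b ≤ a < n`, the half of the triple sum
whose coefficients carry the weight `3 ^ (a - 1)`. -/
noncomputable def nestedSum₃ (s : ℝ) (n : ℕ) : ℝ :=
  ∑ a ∈ Finset.range n, (2 * a + 3 * s)⁻¹ * nestedSum₂ s (a + 1)

/-- The sum of `1 / ((2a + 2 + s) (2b + 2s) (2c + s))` over `c ≤ b ≤ a < n`, the half of the triple
sum whose coefficients carry the weight `1`. -/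
noncomputable def nestedSum₃' (s : ℝ) (n : ℕ) : ℝ :=
  ∑ a ∈ Finset.range n, (2 * a + 2 + s)⁻¹ * nestedSum₂ s (a + 1)

section Shift

variable {s : ℝ}

theorem nestedSum₁_succ (s : ℝ) (n : ℕ) :
    nestedSum₁ s (n + 1) = nestedSum₁ s n + (2 * n + s)⁻¹ :=
  Finset.sum_range_succ _ _

theorem nestedSum₂_succ (s : ℝ) (n : ℕ) :
    nestedSum₂ s (n + 1) = nestedSum₂ s n + (2 * n + 2 * s)⁻¹ * nestedSum₁ s (n + 1) :=
  Finset.sum_range_succ _ _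

theorem nestedSum₃_succ (s : ℝ) (n : ℕ) :
    nestedSum₃ s (n + 1) = nestedSum₃ s n + (2 * n + 3 * s)⁻¹ * nestedSum₂ s (n + 1) :=
  Finset.sum_range_succ _ _

theorem nestedSum₃'_succ (s : ℝ) (n : ℕ) :
    nestedSum₃' s (n + 1) = nestedSum₃' s n + (2 * n + 2 + s)⁻¹ * nestedSum₂ s (n + 1) :=
  Finset.sum_range_succ _ _

theorem nestedSum₁_add_two (s : ℝ) (n : ℕ) :
    nestedSum₁ (s + 2) n = nestedSum₁ s (n + 1) - s⁻¹ := by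
  rw [nestedSum₁, nestedSum₁, Finset.sum_range_succ', Nat.cast_zero, mul_zero, zero_add,
    add_sub_cancel_right]
  refine Finset.sum_congr rfl fun c _ => congrArg _ ?_
  push_cast
  ring

theorem nestedSum₂_add_two (hs : 0 < s) (n : ℕ) :
    nestedSum₂ (s + 2) n =
      nestedSum₂ s (n + 2) - s⁻¹ * nestedSum₁ s (n + 2) + s⁻¹ ^ 2 / 2 := by
  induction n with
  | zero =>
    simp only [nestedSum₂, nestedSum₁, Finset.sum_range_succ, Finset.sum_range_zero]
    push_cast
    field_simp
    ring
  | succ n ih =>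
    rw [nestedSum₂_succ, ih, nestedSum₁_add_two, nestedSum₂_succ s (n + 2),
      nestedSum₁_succ s (n + 2)]
    push_cast
    field_simp
    ring

theorem nestedSum₃_add_two (hs : 0 < s) (n : ℕ) :
    nestedSum₃ (s + 2) n = nestedSum₃ s (n + 3) - s⁻¹ * nestedSum₂ s (n + 3)
      + s⁻¹ ^ 2 / 2 * nestedSum₁ s (n + 3) - s⁻¹ ^ 3 / 6 := by
  induction n with
  | zero =>
    simp only [nestedSum₃, nestedSum₂, nestedSum₁, Finset.sum_range_succ, Finset.sum_range_zero]
    push_cast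
    field_simp
    ring
  | succ n ih =>
    rw [nestedSum₃_succ, ih, nestedSum₂_add_two hs, nestedSum₃_succ s (n + 3),
      nestedSum₂_succ s (n + 3), nestedSum₁_succ s (n + 3)]
    push_cast
    field_simp
    ring

theorem nestedSum₃'_add_two (hs : 0 < s) (n : ℕ) :
    nestedSum₃' (s + 2) n = nestedSum₃' s (n + 1) - s⁻¹ * nestedSum₂ s (n + 2)
      + s⁻¹ ^ 2 / 2 * nestedSum₁ s (n + 2) := by
  induction n with
  | zero =>
    simp only [nestedSum₃', nestedSum₂, nestedSum₁, Finset.sum_range_succ, Finset.sum_range_zero]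
    push_cast
    field_simp
    ring
  | succ n ih =>
    rw [nestedSum₃'_succ, ih, nestedSum₂_add_two hs, nestedSum₃'_succ s (n + 1),
      nestedSum₂_succ s (n + 2), nestedSum₁_succ s (n + 2)]
    push_cast
    field_simp
    ring

theorem nestedSum₃_sub_nestedSum₃'_add_two (hs : 0 < s) (n : ℕ) :
    nestedSum₃ (s + 2) n - nestedSum₃' (s + 2) (n + 1) =
      nestedSum₃ s (n + 3) - nestedSum₃' s (n + 2) - s⁻¹ ^ 3 / 6 := by
  rw [nestedSum₃_add_two hs, nestedSum₃'_add_two hs]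
  ring

end Shift

/-! ### The antitone factor -/

section Kernel

variable {s r : ℝ}

theorem nestedSum₁_nonneg (hs : 0 < s) (n : ℕ) : 0 ≤ nestedSum₁ s n :=
  Finset.sum_nonneg fun c _ => by positivity

theorem nestedSum₂_nonneg (hs : 0 < s) (n : ℕ) : 0 ≤ nestedSum₂ s n :=
  Finset.sum_nonneg fun b _ => mul_nonneg (by positivity) (nestedSum₁_nonneg hs _)

theorem nestedSum₁_anti (hr : 0 < r) (hrs : r ≤ s) (n : ℕ) : nestedSum₁ s n ≤ nestedSum₁ r n :=
  Finset.sum_le_sum fun c _ => by gcongr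

theorem nestedSum₂_anti (hr : 0 < r) (hrs : r ≤ s) (n : ℕ) : nestedSum₂ s n ≤ nestedSum₂ r n :=
  Finset.sum_le_sum fun b _ => mul_le_mul (by gcongr) (nestedSum₁_anti hr hrs _)
    (nestedSum₁_nonneg (hr.trans_le hrs) _) (by positivity)

/-- The nonnegative summand left after extracting the factor `2 * (1 - s)` from the difference of
`nestedSum₃` and `nestedSum₃'`. -/
noncomputable def kernel (s : ℝ) (a : ℕ) : ℝ :=
  (2 * a + 3 * s)⁻¹ * (2 * a + 2 + s)⁻¹ * nestedSum₂ s (a + 1)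

theorem mul_kernel (hs : 0 < s) (a : ℕ) : 2 * (1 - s) * kernel s a =
    ((2 * a + 3 * s)⁻¹ - (2 * a + 2 + s)⁻¹) * nestedSum₂ s (a + 1) := by
  rw [kernel]
  field_simp
  ring

theorem mul_sum_kernel (hs : 0 < s) (n : ℕ) :
    2 * (1 - s) * ∑ a ∈ Finset.range n, kernel s a = nestedSum₃ s n - nestedSum₃' s n := by
  simp only [Finset.mul_sum, mul_kernel hs, sub_mul, Finset.sum_sub_distrib, nestedSum₃,
    nestedSum₃']

theorem kernel_nonneg (hs : 0 < s) (a : ℕ) : 0 ≤ kernel s a :=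
  mul_nonneg (by positivity) (nestedSum₂_nonneg hs _)

theorem kernel_anti (hr : 0 < r) (hrs : r ≤ s) (a : ℕ) : kernel s a ≤ kernel r a := by
  have hs := hr.trans_le hrs
  exact mul_le_mul (by gcongr) (nestedSum₂_anti hr hrs _) (nestedSum₂_nonneg hs _) (by positivity)

theorem sum_kernel_shift (hs : 0 < s) (n : ℕ) :
    2 * (1 - s) * ∑ a ∈ Finset.range (n + 3), kernel s a
        + (2 * ↑(n + 2) + 2 + s)⁻¹ * nestedSum₂ s (n + 2 + 1) =
      2 * (1 - (s + 2)) * ∑ a ∈ Finset.range n, kernel (s + 2) a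
        - (2 * n + 2 + (s + 2))⁻¹ * nestedSum₂ (s + 2) (n + 1) + s⁻¹ ^ 3 / 6 := by
  have h := nestedSum₃_sub_nestedSum₃'_add_two hs n
  rw [mul_sum_kernel hs, mul_sum_kernel (by positivity)]
  rw [nestedSum₃'_succ (s + 2)] at h
  rw [nestedSum₃'_succ s (n + 2)]
  linarith

-- For `s < 1` the identity `sum_kernel_shift` writes `s⁻¹ ^ 3 / 6` as a sum of nonnegative terms.
theorem summable_kernel_of_lt_one (hs : 0 < s) (hs1 : s < 1) : Summable (kernel s) := by
  have hpos : 0 < 2 * (1 - s) := by linarith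
  refine summable_of_sum_range_le (c := s⁻¹ ^ 3 / 6 / (2 * (1 - s))) (kernel_nonneg hs)
    fun n => ?_
  rw [le_div_iff₀' hpos]
  have hs2 : 0 < s + 2 := by positivity
  have hbdry : 0 ≤ (2 * ↑(n + 2) + 2 + s)⁻¹ * nestedSum₂ s (n + 2 + 1) :=
    mul_nonneg (by positivity) (nestedSum₂_nonneg hs _)
  have hbdry' : 0 ≤ (2 * n + 2 + (s + 2))⁻¹ * nestedSum₂ (s + 2) (n + 1) :=
    mul_nonneg (by positivity) (nestedSum₂_nonneg hs2 _)
  have hshifted : 0 ≤ (s + 1) * ∑ a ∈ Finset.range n, kernel (s + 2) a :=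
    mul_nonneg (by positivity) (Finset.sum_nonneg fun a _ => kernel_nonneg hs2 a)
  calc 2 * (1 - s) * ∑ a ∈ Finset.range n, kernel s a
      ≤ 2 * (1 - s) * ∑ a ∈ Finset.range (n + 3), kernel s a :=
        mul_le_mul_of_nonneg_left (Finset.sum_le_sum_of_subset_of_nonneg
          (Finset.range_mono (by lia)) fun a _ _ => kernel_nonneg hs a) hpos.le
    _ ≤ s⁻¹ ^ 3 / 6 := by linarith [sum_kernel_shift hs n]

theorem summable_kernel (hs : 0 < s) : Summable (kernel s) := by
  have hr : 0 < min s (1 / 2) := by positivity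
  exact .of_nonneg_of_le (kernel_nonneg hs) (kernel_anti hr (min_le_left _ _))
    (summable_kernel_of_lt_one hr ((min_le_right _ _).trans_lt (by norm_num)))

end Kernel

section Boundary

theorem tendsto_inv_mul_succ {u : ℕ → ℝ}
    (hu : Tendsto (fun n : ℕ => (n : ℝ)⁻¹ * u n) atTop (nhds 0)) (c : ℝ) :
    Tendsto (fun n : ℕ => (2 * n + c)⁻¹ * u (n + 1)) atTop (nhds 0) := by
  have hratio : Tendsto (fun n : ℕ => (1 + 1 * (n : ℝ)) / (c + 2 * n)) atTop (nhds (1 / 2)) :=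
    tendsto_add_mul_div_add_mul_atTop_nhds 1 c 1 two_ne_zero
  have h := hratio.mul (hu.comp (tendsto_add_atTop_nat 1))
  rw [mul_zero] at h
  refine h.congr fun n => ?_
  rw [Function.comp_apply, Nat.cast_succ]
  have : (n : ℝ) + 1 ≠ 0 := by positivity
  rw [one_mul, add_comm 1 (n : ℝ), add_comm c, div_eq_mul_inv]
  field_simp

theorem tendsto_inv_mul_nestedSum₁ (s : ℝ) :
    Tendsto (fun n : ℕ => (n : ℝ)⁻¹ * nestedSum₁ s n) atTop (nhds 0) := by
  have hden : Tendsto (fun n : ℕ => 2 * (n : ℝ) + s) atTop atTop :=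
    tendsto_atTop_add_const_right _ _ (tendsto_natCast_atTop_atTop.const_mul_atTop two_pos)
  exact hden.inv_tendsto_atTop.cesaro

theorem tendsto_inv_mul_nestedSum₂ (s : ℝ) :
    Tendsto (fun n : ℕ => (n : ℝ)⁻¹ * nestedSum₂ s n) atTop (nhds 0) :=
  (tendsto_inv_mul_succ (tendsto_inv_mul_nestedSum₁ s) (2 * s)).cesaro

theorem tendsto_inv_mul_nestedSum₂_succ (s : ℝ) :
    Tendsto (fun n : ℕ => (2 * n + 2 + s)⁻¹ * nestedSum₂ s (n + 1)) atTop (nhds 0) := by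
  simpa only [add_assoc] using tendsto_inv_mul_succ (tendsto_inv_mul_nestedSum₂ s) (2 + s)

end Boundary

section KernelSum

variable {s : ℝ}

/-- The sum of the kernel over all rows. Multiplied by `2 * (1 - s)` it is the infinite triple
sum attached to `s`. -/
noncomputable def kernelSum (s : ℝ) : ℝ := ∑' a, kernel s a

theorem antitoneOn_kernelSum : AntitoneOn kernelSum (Set.Ioi 0) := fun _ hr _ hs hrs =>
  (summable_kernel hs).tsum_le_tsum (kernel_anti hr hrs) (summable_kernel hr)

theorem mul_kernelSum_shift (hs : 0 < s) :
    2 * (1 - s) * kernelSum s = 2 * (1 - (s + 2)) * kernelSum (s + 2) + s⁻¹ ^ 3 / 6 := by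
  have hs2 : 0 < s + 2 := by positivity
  have hleft := (((tendsto_add_atTop_iff_nat 3).2
    (summable_kernel hs).hasSum.tendsto_sum_nat).const_mul (2 * (1 - s))).add
      ((tendsto_add_atTop_iff_nat 2).2 (tendsto_inv_mul_nestedSum₂_succ s))
  have hright := ((((summable_kernel hs2).hasSum.tendsto_sum_nat).const_mul
    (2 * (1 - (s + 2)))).sub (tendsto_inv_mul_nestedSum₂_succ (s + 2))).add_const (s⁻¹ ^ 3 / 6)
  have h := tendsto_nhds_unique (hleft.congr (sum_kernel_shift hs)) hright
  rwa [add_zero, sub_zero] at h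

theorem mul_kernelSum_eq_add_sum (hs : 0 < s) (n : ℕ) : 2 * (1 - s) * kernelSum s =
    2 * (1 - (s + 2 * n)) * kernelSum (s + 2 * n)
      + (∑ i ∈ Finset.range n, (2 * i + s)⁻¹ ^ 3) / 6 := by
  induction n with
  | zero => simp
  | succ n ih =>
    have hshift := mul_kernelSum_shift (s := s + 2 * n) (by positivity)
    rw [ih, Finset.sum_range_succ, hshift, Nat.cast_succ,
      show s + 2 * ((n : ℝ) + 1) = s + 2 * n + 2 by ring, add_comm s (2 * (n : ℝ))]
    ring

theorem summable_inv_pow (hs : 0 < s) {k : ℕ} (hk : 1 < k) :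
    Summable fun i : ℕ => (2 * i + s)⁻¹ ^ k := by
  have h := (Real.summable_one_div_nat_add_rpow (s / 2) k).2 (by exact_mod_cast hk)
  refine (h.mul_left ((2 : ℝ)⁻¹ ^ k)).congr fun i => ?_
  rw [Real.rpow_natCast, abs_of_pos (by positivity), one_div, ← inv_pow, ← mul_pow, ← mul_inv,
    mul_add, mul_div_cancel₀ s two_ne_zero]

/-- The sum of `1 / m ^ k` over the odd positive integers `m`. -/
noncomputable def oddZeta (k : ℕ) : ℝ := ∑' i : ℕ, (2 * i + 1 : ℝ)⁻¹ ^ k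

theorem tendsto_mul_of_antitoneOn {g : ℝ → ℝ} (hg : AntitoneOn g (Set.Ioi 0)) {l : ℝ}
    (hl : Tendsto (fun n : ℕ => n * g (1 + 2 * n)) atTop (nhds l)) (hs : 0 < s) :
    Tendsto (fun n : ℕ => n * g (s + 2 * n)) atTop (nhds l) := by
  have hshift : ∀ k : ℕ, Tendsto (fun n : ℕ => ((n : ℝ) + 1) * g (1 + 2 * ↑(n + k))) atTop
      (nhds l) := fun k => by
    have hratio : Tendsto (fun n : ℕ => (1 + 1 * (n : ℝ)) / (k + 1 * n)) atTop (nhds (1 / 1)) :=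
      tendsto_add_mul_div_add_mul_atTop_nhds 1 _ 1 one_ne_zero
    have h := hratio.mul ((tendsto_add_atTop_iff_nat k).2 hl)
    rw [div_one, one_mul] at h
    refine h.congr' ?_
    filter_upwards [eventually_gt_atTop 0] with n hn
    have hnk : (k : ℝ) + n ≠ 0 := by positivity
    rw [one_mul, add_comm 1 (n : ℝ), Nat.cast_add, add_comm (n : ℝ) k]
    field_simp
  obtain ⟨m, hm⟩ := exists_nat_ge s
  have hle (n : ℕ) {x y : ℝ} (hx : 0 < x) (hxy : x ≤ y) : ((n : ℝ) + 1) * g y ≤ (n + 1) * g x :=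
    mul_le_mul_of_nonneg_left (hg hx (hx.trans_le hxy) hxy) n.cast_add_one_pos.le
  rw [← tendsto_add_atTop_iff_nat 1]
  simp only [Nat.cast_add_one]
  refine tendsto_of_tendsto_of_tendsto_of_le_of_le (hshift (m + 1)) (hshift 0)
    (fun n => hle n (by positivity) ?_) (fun n => hle n (by positivity) ?_)
  all_goals
    push_cast
    linarith

theorem tendsto_mul_kernelSum_one :
    Tendsto (fun n : ℕ => n * kernelSum (1 + 2 * n)) atTop
      (nhds (oddZeta 3 / 24)) := by
  have hsum := (summable_inv_pow one_pos (by norm_num : 1 < 3)).hasSum.tendsto_sum_nat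
  refine (hsum.div_const 24).congr fun n => ?_
  linarith [mul_kernelSum_eq_add_sum one_pos n]

theorem tendsto_mul_kernelSum (hs : 0 < s) :
    Tendsto (fun n : ℕ => 2 * (1 - (s + 2 * n)) * kernelSum (s + 2 * n)) atTop
      (nhds (-(oddZeta 3 / 6))) := by
  have hmul := tendsto_mul_of_antitoneOn antitoneOn_kernelSum tendsto_mul_kernelSum_one hs
  have hzero : Tendsto (fun n : ℕ => kernelSum (s + 2 * n)) atTop (nhds 0) := by
    have h := tendsto_inv_atTop_nhds_zero_nat (𝕜 := ℝ).mul hmul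
    rw [zero_mul] at h
    refine h.congr' ?_
    filter_upwards [eventually_ne_atTop 0] with n hn
    exact inv_mul_cancel_left₀ (Nat.cast_ne_zero.2 hn) _
  convert! (hzero.const_mul (2 * (1 - s))).sub (hmul.const_mul 4) using 2 <;> ring

theorem six_mul_kernelSum_eq_sub (hs : 0 < s) : 6 * (2 * (1 - s) * kernelSum s) =
    (∑' i : ℕ, (2 * i + s)⁻¹ ^ 3) - oddZeta 3 := by
  have h := (tendsto_mul_kernelSum hs).add
    ((summable_inv_pow hs (by norm_num : 1 < 3)).hasSum.tendsto_sum_nat.div_const 6)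
  have hconst := tendsto_nhds_unique (tendsto_const_nhds.congr (mul_kernelSum_eq_add_sum hs)) h
  linarith

end KernelSum

/-! ### Expansion in powers of `t = 1 - s` -/

open Finset.HasAntidiagonal (antidiagonal)

theorem hasSum_inv_sub_pow {𝕜 : Type*} [NormedField 𝕜] [CompleteSpace 𝕜] {m t : 𝕜} (k : ℕ)
    (h : ‖t‖ < ‖m‖) :
    HasSum (fun w : ℕ => (w + k).choose k * m⁻¹ ^ (w + k + 1) * t ^ w)
      ((m - t)⁻¹ ^ (k + 1)) := by
  have hm : m ≠ 0 := norm_pos_iff.1 ((norm_nonneg t).trans_lt h)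
  have hratio : ‖m⁻¹ * t‖ < 1 := by
    rwa [norm_mul, norm_inv, ← div_eq_inv_mul, div_lt_one (norm_pos_iff.2 hm)]
  convert! (hasSum_choose_mul_geometric_of_norm_lt_one k hratio).mul_left (m⁻¹ ^ (k + 1)) using 1
  · ext w
    ring
  · rw [one_div, ← inv_pow, ← mul_pow, ← mul_inv, mul_sub, mul_one, mul_inv_cancel_left₀ hm]

theorem hasSum_inv_sub_mul {𝕜 : Type*} [NormedField 𝕜] [CompleteSpace 𝕜] {m c t : 𝕜}
    (h : ‖c * t‖ < ‖m‖) :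
    HasSum (fun w : ℕ => c ^ w * m⁻¹ ^ (w + 1) * t ^ w) (m - c * t)⁻¹ := by
  have h0 := hasSum_inv_sub_pow 0 h
  rw [zero_add, pow_one] at h0
  refine h0.congr_fun fun w => ?_
  rw [Nat.choose_zero_right, Nat.cast_one, mul_pow]
  ring

theorem hasSum_antidiagonal_mul_pow {𝕜 : Type*} [RCLike 𝕜] {p q : ℕ → 𝕜} {t A B : 𝕜}
    (hp : HasSum (fun i => p i * t ^ i) A) (hq : HasSum (fun i => q i * t ^ i) B) :
    HasSum (fun w => (∑ x ∈ antidiagonal w, p x.1 * q x.2) * t ^ w) (A * B) := by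
  have hp' := hp.summable.norm
  have hq' := hq.summable.norm
  have h := (summable_norm_sum_mul_antidiagonal_of_summable_norm hp' hq').of_norm.hasSum
  rw [← tsum_mul_tsum_eq_tsum_sum_antidiagonal_of_summable_norm hp' hq', hp.tsum_eq,
    hq.tsum_eq] at h
  refine h.congr_fun fun w => ?_
  rw [Finset.sum_mul]
  refine Finset.sum_congr rfl fun x hx => ?_
  rw [← Finset.HasAntidiagonal.mem_antidiagonal.1 hx, pow_add]
  ring

theorem eq_of_hasSum_mul_pow {𝕜 : Type*} [NontriviallyNormedField 𝕜] {p q : ℕ → 𝕜} {f : 𝕜 → 𝕜}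
    (hp : ∀ᶠ t in nhds 0, HasSum (fun w => p w * t ^ w) (f t))
    (hq : ∀ᶠ t in nhds 0, HasSum (fun w => q w * t ^ w) (f t)) : p = q := by
  have hseries : ∀ s : ℕ → 𝕜, (∀ᶠ t in nhds 0, HasSum (fun w => s w * t ^ w) (f t)) →
      HasFPowerSeriesAt f (FormalMultilinearSeries.ofScalars 𝕜 s) 0 := fun s hs => by
    rw [hasFPowerSeriesAt_iff]
    simpa only [zero_add, FormalMultilinearSeries.coeff_ofScalars, smul_eq_mul, mul_comm] using hs
  have h := (hseries p hp).eq_formalMultilinearSeries (hseries q hq)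
  funext w
  simpa only [FormalMultilinearSeries.coeff_ofScalars] using congrArg (fun P => P.coeff w) h

section TermByTerm

variable {c : ℕ → ℕ → ℝ} {f : ℝ → ℕ → ℝ} {r : ℝ}

theorem summable_coeff_mul_pow (hc : ∀ a w, 0 ≤ c a w)
    (hf : ∀ t, |t| < r → ∀ a, HasSum (fun w => c a w * t ^ w) (f t a))
    (hs : ∀ t, 0 ≤ t → t < r → Summable (f t)) {t : ℝ} (ht : |t| < r) :
    Summable fun x : ℕ × ℕ => c x.1 x.2 * t ^ x.2 := by
  refine Summable.of_norm ((summable_prod_of_nonneg fun x => norm_nonneg _).2 ?_)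
  have h : ∀ a, HasSum (fun w => ‖c a w * t ^ w‖) (f |t| a) := fun a => by
    refine (hf |t| (by rwa [abs_abs]) a).congr_fun fun w => ?_
    rw [Real.norm_eq_abs, abs_mul, abs_pow, abs_of_nonneg (hc a w)]
  exact ⟨fun a => (h a).summable, by
    simpa only [fun a => (h a).tsum_eq] using hs |t| (abs_nonneg t) ht⟩

theorem summable_coeff (hc : ∀ a w, 0 ≤ c a w)
    (hf : ∀ t, |t| < r → ∀ a, HasSum (fun w => c a w * t ^ w) (f t a))
    (hs : ∀ t, 0 ≤ t → t < r → Summable (f t)) (hr : 0 < r) (w : ℕ) :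
    Summable fun a => c a w := by
  have hr2 : |r / 2| < r := by rw [abs_of_pos (half_pos hr)]; exact half_lt_self hr
  exact (summable_mul_right_iff (pow_ne_zero w (half_pos hr).ne')).1
    ((summable_coeff_mul_pow hc hf hs hr2).prod_symm.prod_factor w)

theorem hasSum_tsum_coeff (hc : ∀ a w, 0 ≤ c a w)
    (hf : ∀ t, |t| < r → ∀ a, HasSum (fun w => c a w * t ^ w) (f t a))
    (hs : ∀ t, 0 ≤ t → t < r → Summable (f t)) {t : ℝ} (ht : |t| < r) :
    HasSum (fun w => (∑' a, c a w) * t ^ w) (∑' a, f t a) := by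
  have h := (summable_coeff_mul_pow hc hf hs ht).hasSum
  rw [(h.prod_fiberwise (hf t ht)).tsum_eq]
  rw [← (Equiv.prodComm ℕ ℕ).hasSum_iff] at h
  exact h.prod_fiberwise fun w =>
    (summable_coeff hc hf hs ((abs_nonneg t).trans_lt ht) w).hasSum.mul_right (t ^ w)

end TermByTerm

/-- Partial sum of `∑ 1 / m ^ l` over the first `n` odd positive integers `m`. -/
noncomputable def oddSum (l n : ℕ) : ℝ :=
  ∑ c ∈ Finset.range n, (2 * c + 1 : ℝ)⁻¹ ^ l

/-- Partial sum, over the first `n` even positive integers `m₂`, of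
`∑ 1 / (m₂ ^ j * m₃ ^ l)` with `m₃ < m₂` odd. -/
noncomputable def evenOddSum (j l n : ℕ) : ℝ :=
  ∑ b ∈ Finset.range n, (2 * b + 2 : ℝ)⁻¹ ^ j * oddSum l (b + 1)

/-- The sum of the terms of the series of `T(i, j, l) / 8` with largest index `2 * a + 3`. -/
noncomputable def tripleRow (i j l a : ℕ) : ℝ :=
  (2 * a + 3 : ℝ)⁻¹ ^ i * evenOddSum j l (a + 1)

/-- The coefficients of the expansion of `2 * t * kernel (1 - t) a` in powers of `t`. -/
noncomputable def rowCoeff (a w : ℕ) : ℝ :=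
  ∑ x ∈ antidiagonal w, (3 ^ x.1 - 1) *
    ∑ y ∈ antidiagonal x.2, 2 ^ y.1 * tripleRow (x.1 + 1) (y.1 + 1) (y.2 + 1) a

theorem tripleRow_nonneg (i j l a : ℕ) : 0 ≤ tripleRow i j l a :=
  mul_nonneg (by positivity) (Finset.sum_nonneg fun b _ =>
    mul_nonneg (by positivity) (Finset.sum_nonneg fun c _ => by positivity))

theorem three_pow_sub_one_nonneg (i : ℕ) : (0 : ℝ) ≤ 3 ^ i - 1 :=
  sub_nonneg.2 (one_le_pow₀ (by norm_num))

theorem rowCoeff_nonneg (a w : ℕ) : 0 ≤ rowCoeff a w :=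
  Finset.sum_nonneg fun x _ => mul_nonneg (three_pow_sub_one_nonneg _)
    (Finset.sum_nonneg fun y _ => mul_nonneg (by positivity) (tripleRow_nonneg _ _ _ _))

section Expansion

variable {t : ℝ}

theorem norm_mul_lt_norm {c m : ℝ} (hm : 0 < m) (hc : |c| ≤ m) (ht : |t| < 1) :
    ‖c * t‖ < ‖m‖ := by
  rw [norm_mul, Real.norm_of_nonneg hm.le]
  exact (mul_le_mul_of_nonneg_right hc (norm_nonneg t)).trans_lt (mul_lt_of_lt_one_right hm ht)

theorem hasSum_nestedSum₁ (ht : |t| < 1) (n : ℕ) :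
    HasSum (fun w => oddSum (w + 1) n * t ^ w) (nestedSum₁ (1 - t) n) := by
  simp only [oddSum, nestedSum₁, Finset.sum_mul]
  refine hasSum_sum fun c _ => ?_
  have hlt : ‖1 * t‖ < ‖(2 * c + 1 : ℝ)‖ :=
    norm_mul_lt_norm (by positivity) (by simp) ht
  simpa only [one_pow, one_mul, add_sub_assoc] using hasSum_inv_sub_mul hlt

theorem hasSum_nestedSum₂ (ht : |t| < 1) (n : ℕ) :
    HasSum (fun w => (∑ y ∈ antidiagonal w, 2 ^ y.1 * evenOddSum (y.1 + 1) (y.2 + 1) n) * t ^ w)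
      (nestedSum₂ (1 - t) n) := by
  have hlt (b : ℕ) : ‖2 * t‖ < ‖(2 * b + 2 : ℝ)‖ :=
    norm_mul_lt_norm (by positivity) (by simp) ht
  have h := hasSum_sum fun b (_ : b ∈ Finset.range n) =>
    hasSum_antidiagonal_mul_pow (hasSum_inv_sub_mul (hlt b)) (hasSum_nestedSum₁ ht (b + 1))
  convert! h using 1
  · ext w
    simp only [evenOddSum, Finset.mul_sum, ← Finset.sum_mul, mul_assoc]
    rw [Finset.sum_comm]
  · refine Finset.sum_congr rfl fun b _ => ?_
    ring_nf

theorem hasSum_rowCoeff (ht : |t| < 1) (a : ℕ) :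
    HasSum (fun w => rowCoeff a w * t ^ w) (2 * t * kernel (1 - t) a) := by
  have hlt (c : ℝ) (hc : |c| ≤ 3) : ‖c * t‖ < ‖(2 * a + 3 : ℝ)‖ :=
    norm_mul_lt_norm (by positivity) (hc.trans (by simp)) ht
  have hfactor := (hasSum_inv_sub_mul (hlt 3 (by norm_num))).sub
    (hasSum_inv_sub_mul (hlt 1 (by norm_num)))
  simp only [← sub_mul] at hfactor
  have hmul := mul_kernel (s := 1 - t) (by linarith [(abs_lt.1 ht).2]) a
  convert! hasSum_antidiagonal_mul_pow hfactor (hasSum_nestedSum₂ ht (a + 1)) using 1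
  · ext w
    simp only [rowCoeff, tripleRow, Finset.mul_sum, one_pow]
    refine congrArg (· * t ^ w) (Finset.sum_congr rfl fun x _ => Finset.sum_congr rfl fun y _ => ?_)
    ring
  · rw [show 2 * t = 2 * (1 - (1 - t)) by ring, hmul]
    ring_nf

end Expansion

section Coefficients

variable {t : ℝ}

theorem summable_mul_kernel (ht : t < 1) : Summable fun a => 2 * t * kernel (1 - t) a :=
  (summable_kernel (sub_pos.2 ht)).mul_left (2 * t)

theorem summable_rowCoeff (w : ℕ) : Summable fun a => rowCoeff a w :=
  summable_coeff rowCoeff_nonneg (fun _ ht => hasSum_rowCoeff ht)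
    (fun _ _ ht => summable_mul_kernel ht) one_pos w

theorem hasSum_tsum_rowCoeff (ht : |t| < 1) :
    HasSum (fun w => (∑' a, rowCoeff a w) * t ^ w) (2 * t * kernelSum (1 - t)) := by
  rw [kernelSum, ← tsum_mul_left]
  exact hasSum_tsum_coeff rowCoeff_nonneg (fun _ ht => hasSum_rowCoeff ht)
    (fun _ _ ht => summable_mul_kernel ht) ht

theorem hasSum_tsum_inv_cube (ht : |t| < 1) :
    HasSum (fun w => (w + 2).choose 2 * oddZeta (w + 3) * t ^ w)
      (∑' i : ℕ, (2 * i + (1 - t))⁻¹ ^ 3) := by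
  have hterm : ∀ t : ℝ, |t| < 1 → ∀ i : ℕ,
      HasSum (fun w : ℕ => (w + 2).choose 2 * (2 * i + 1 : ℝ)⁻¹ ^ (w + 3) * t ^ w)
        ((2 * i + (1 - t))⁻¹ ^ 3) := fun t ht i => by
    have hlt : ‖1 * t‖ < ‖(2 * i + 1 : ℝ)‖ := norm_mul_lt_norm (by positivity) (by simp) ht
    rw [one_mul] at hlt
    simpa only [add_sub_assoc] using hasSum_inv_sub_pow 2 hlt
  simpa only [oddZeta, tsum_mul_left] using hasSum_tsum_coeff (fun i w => by positivity) hterm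
    (fun t _ ht => summable_inv_pow (sub_pos.2 ht) (by norm_num)) ht

theorem six_mul_tsum_rowCoeff {w : ℕ} (hw : w ≠ 0) :
    6 * ∑' a, rowCoeff a w = (w + 2).choose 2 * oddZeta (w + 3) := by
  have hnear : ∀ᶠ t : ℝ in nhds 0, |t| < 1 := by
    filter_upwards [Metric.ball_mem_nhds (0 : ℝ) one_pos] with t ht
    rwa [mem_ball_zero_iff] at ht
  have hleft : ∀ᶠ t : ℝ in nhds 0, HasSum (fun w => 6 * (∑' a, rowCoeff a w) * t ^ w)
      (6 * (2 * t * kernelSum (1 - t))) :=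
    hnear.mono fun t ht => by
      simpa only [mul_assoc] using (hasSum_tsum_rowCoeff ht).mul_left 6
  have hright : ∀ᶠ t : ℝ in nhds 0, HasSum
      (fun w => ((w + 2).choose 2 * oddZeta (w + 3) - if w = 0 then oddZeta 3 else 0) * t ^ w)
      (6 * (2 * t * kernelSum (1 - t))) :=
    hnear.mono fun t ht => by
      have h := six_mul_kernelSum_eq_sub (sub_pos.2 (abs_lt.1 ht).2)
      rw [sub_sub_cancel] at h
      rw [h]
      refine ((hasSum_tsum_inv_cube ht).sub (hasSum_ite_eq 0 (oddZeta 3))).congr_fun fun w => ?_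
      rcases eq_or_ne w 0 with rfl | hw <;> simp [*]
  simpa only [if_neg hw, sub_zero] using congrFun (eq_of_hasSum_mul_pow hleft hright) w

theorem summable_tripleRow {i : ℕ} (hi : i ≠ 0) (j l : ℕ) :
    Summable (tripleRow (i + 1) (j + 1) (l + 1)) := by
  refine .of_nonneg_of_le (tripleRow_nonneg _ _ _) (fun a => ?_) (summable_rowCoeff (i + (j + l)))
  have h3 : (1 : ℝ) ≤ 3 ^ i - 1 := by
    linarith [le_self_pow₀ (by norm_num : (1 : ℝ) ≤ 3) hi]
  have h2 : (1 : ℝ) ≤ 2 ^ j := one_le_pow₀ one_le_two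
  have hinner (k : ℕ) (y : ℕ × ℕ) :
      (0 : ℝ) ≤ 2 ^ y.1 * tripleRow (k + 1) (y.1 + 1) (y.2 + 1) a :=
    mul_nonneg (by positivity) (tripleRow_nonneg _ _ _ _)
  calc tripleRow (i + 1) (j + 1) (l + 1) a
      ≤ 2 ^ j * tripleRow (i + 1) (j + 1) (l + 1) a :=
        le_mul_of_one_le_left (tripleRow_nonneg _ _ _ a) h2
    _ ≤ ∑ y ∈ antidiagonal (j + l), 2 ^ y.1 * tripleRow (i + 1) (y.1 + 1) (y.2 + 1) a :=
        Finset.single_le_sum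
          (f := fun y : ℕ × ℕ => 2 ^ y.1 * tripleRow (i + 1) (y.1 + 1) (y.2 + 1) a)
          (fun y _ => hinner i y) (Finset.HasAntidiagonal.mem_antidiagonal.2 rfl : (j, l) ∈ _)
    _ ≤ (3 ^ i - 1) *
          ∑ y ∈ antidiagonal (j + l), 2 ^ y.1 * tripleRow (i + 1) (y.1 + 1) (y.2 + 1) a :=
        le_mul_of_one_le_left (Finset.sum_nonneg fun y _ => hinner i y) h3
    _ ≤ rowCoeff a (i + (j + l)) :=
        Finset.single_le_sum (f := fun x : ℕ × ℕ => ((3 : ℝ) ^ x.1 - 1) *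
            ∑ y ∈ antidiagonal x.2, 2 ^ y.1 * tripleRow (x.1 + 1) (y.1 + 1) (y.2 + 1) a)
          (fun x _ => mul_nonneg (three_pow_sub_one_nonneg _)
            (Finset.sum_nonneg fun y _ => hinner x.1 y))
          (Finset.HasAntidiagonal.mem_antidiagonal.2 rfl : (i, j + l) ∈ _)

end Coefficients

/-! ### Multiple T-values -/

section TValues

theorem limUnder_sum_Icc {M : Type*} [AddCommMonoid M] [TopologicalSpace M] [T2Space M]
    {u : ℕ → M} {S : M} (h : HasSum u S) (h0 : u 0 = 0) :
    limUnder atTop (fun N : ℕ => ∑ m ∈ Finset.Icc 1 N, u m) = S := by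
  refine Tendsto.limUnder_eq (((tendsto_add_atTop_iff_nat 1).2 h.tendsto_sum_nat).congr fun N => ?_)
  rw [Finset.sum_range_succ', h0, add_zero, Finset.range_eq_Ico, Finset.sum_Ico_add' u 0 N 1,
    zero_add, Finset.Ico_add_one_right_eq_Icc]

theorem sum_Ico_even {M : Type*} [AddCommMonoid M] (g : ℕ → M) (a : ℕ) :
    (∑ m ∈ Finset.Ico 1 (2 * a + 3), if m % 2 = 0 then g m else 0) =
      ∑ b ∈ Finset.range (a + 1), g (2 * b + 2) := by
  induction a with
  | zero => simp [Finset.sum_Ico_succ_top]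
  | succ a ih =>
    rw [Finset.sum_range_succ, ← ih, show 2 * (a + 1) + 3 = 2 * a + 3 + 1 + 1 by ring,
      Finset.sum_Ico_succ_top (by lia), Finset.sum_Ico_succ_top (by lia),
      if_neg (by lia), if_pos (by lia), add_zero]
    rfl

theorem sum_Ico_odd {M : Type*} [AddCommMonoid M] (g : ℕ → M) (a : ℕ) :
    (∑ m ∈ Finset.Ico 1 (2 * a + 2), if m % 2 = 1 then g m else 0) =
      ∑ b ∈ Finset.range (a + 1), g (2 * b + 1) := by
  induction a with
  | zero => simp
  | succ a ih =>
    rw [Finset.sum_range_succ, ← ih, show 2 * (a + 1) + 2 = 2 * a + 2 + 1 + 1 by ring,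
      Finset.sum_Ico_succ_top (by lia), Finset.sum_Ico_succ_top (by lia),
      if_neg (by lia), if_pos (by lia), add_zero]
    rfl

theorem sum_Ico_tValue3_term (i j l a : ℕ) :
    ∑ m₂ ∈ Finset.Ico 1 (2 * a + 3), ∑ m₃ ∈ Finset.Ico 1 m₂,
      (if (2 * a + 3) % 2 = 1 ∧ m₂ % 2 = 0 ∧ m₃ % 2 = 1 then
        8 / (((2 * a + 3 : ℕ) : ℝ) ^ i * (m₂ : ℝ) ^ j * (m₃ : ℝ) ^ l) else 0) =
      8 * tripleRow i j l a := by
  have hodd : (2 * a + 3) % 2 = 1 := by lia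
  simp only [hodd, true_and, ite_and, Finset.sum_ite_irrel, Finset.sum_const_zero]
  simp only [sum_Ico_even, sum_Ico_odd, tripleRow, evenOddSum, oddSum, Finset.mul_sum]
  refine Finset.sum_congr rfl fun b _ => Finset.sum_congr rfl fun c _ => ?_
  push_cast
  rw [inv_pow, inv_pow, inv_pow, div_eq_mul_inv, mul_inv, mul_inv, mul_assoc (_⁻¹)]

theorem tValue3_eq {i j l : ℕ} (h : Summable (tripleRow i j l)) :
    tValue3 i j l = 8 * ∑' a, tripleRow i j l a := by
  refine limUnder_sum_Icc ?_ (by simp)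
  have hinj : Function.Injective (fun a : ℕ => 2 * a + 3) := fun a b h => by simpa using h
  rw [← hinj.hasSum_iff]
  · exact (h.hasSum.mul_left 8).congr_fun (sum_Ico_tValue3_term i j l)
  · intro m hm
    refine Finset.sum_eq_zero fun m₂ h₂ => Finset.sum_eq_zero fun m₃ h₃ => if_neg ?_
    rw [Finset.mem_Ico] at h₂ h₃
    rintro ⟨hodd, -, -⟩
    exact hm ⟨(m - 3) / 2, by dsimp only; lia⟩

theorem tValue1_eq {k : ℕ} (hk : 1 < k) : tValue1 k = 2 * oddZeta k := by
  refine limUnder_sum_Icc ?_ (by simp)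
  have hinj : Function.Injective (fun i : ℕ => 2 * i + 1) := fun i j h => by simpa using h
  rw [← hinj.hasSum_iff]
  · refine ((summable_inv_pow one_pos hk).hasSum.mul_left 2).congr_fun fun i => ?_
    rw [Function.comp_apply, if_pos (by lia), div_eq_mul_inv, inv_pow]
    push_cast
    rfl
  · exact fun m hm => if_neg fun hodd => hm ⟨m / 2, by dsimp only; lia⟩

theorem hasSum_mul_tripleRow (i j l : ℕ) :
    HasSum (fun a => ((3 : ℝ) ^ i - 1) * tripleRow (i + 1) (j + 1) (l + 1) a)
      ((3 ^ i - 1) * (tValue3 (i + 1) (j + 1) (l + 1) / 8)) := by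
  rcases eq_or_ne i 0 with rfl | hi
  · simp
  · have hs := summable_tripleRow hi j l
    rw [tValue3_eq hs, mul_div_cancel_left₀ _ (by norm_num : (8 : ℝ) ≠ 0)]
    exact hs.hasSum.mul_left _

theorem tsum_rowCoeff (w : ℕ) : ∑' a, rowCoeff a w =
    ∑ x ∈ antidiagonal w, ∑ y ∈ antidiagonal x.2,
      2 ^ y.1 * ((3 ^ x.1 - 1) * (tValue3 (x.1 + 1) (y.1 + 1) (y.2 + 1) / 8)) := by
  simp only [rowCoeff, Finset.mul_sum, mul_left_comm (_ - (1 : ℝ))]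
  exact (hasSum_sum fun x _ => hasSum_sum fun y _ =>
    (hasSum_mul_tripleRow x.1 y.1 y.2).mul_left _).tsum_eq

theorem sum_antidiagonal_tValue3 {v : ℕ} (hv : v ≠ 0) :
    ∑ x ∈ antidiagonal v, ∑ y ∈ antidiagonal x.2,
      (2 : ℝ) ^ (y.1 + 1) * (3 ^ x.1 - 1) * tValue3 (x.1 + 1) (y.1 + 1) (y.2 + 1) =
      4 / 3 * (v + 2).choose 2 * tValue1 (v + 3) := by
  have h := six_mul_tsum_rowCoeff hv
  calc _ = 16 * ∑' a, rowCoeff a v := by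
        simp only [tsum_rowCoeff, Finset.mul_sum]
        refine Finset.sum_congr rfl fun x _ => Finset.sum_congr rfl fun y _ => ?_
        ring
    _ = _ := by
        rw [tValue1_eq (by lia)]
        linarith

end TValues

theorem sum_Icc_eq_sum_antidiagonal {M : Type*} [AddCommMonoid M] {F : ℕ → ℕ → ℕ → M}
    (hF : ∀ b c, F 1 b c = 0) (v : ℕ) :
    ∑ a ∈ Finset.Icc 2 (v + 1), ∑ b ∈ Finset.Icc 1 (v + 3 - a - 1), F a b (v + 3 - a - b) =
      ∑ x ∈ antidiagonal v, ∑ y ∈ antidiagonal x.2, F (x.1 + 1) (y.1 + 1) (y.2 + 1) := by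
  simp only [Finset.Nat.sum_antidiagonal_eq_sum_range_succ_mk]
  rw [Finset.sum_range_succ']
  simp only [zero_add, hF, Finset.sum_const_zero, add_zero]
  rw [← Finset.Ico_add_one_right_eq_Icc, Finset.sum_Ico_eq_sum_range]
  refine Finset.sum_congr (by congr 1) fun i hi => ?_
  have hi := Finset.mem_range.1 hi
  rw [← Finset.Ico_add_one_right_eq_Icc, Finset.sum_Ico_eq_sum_range]
  refine Finset.sum_congr (by congr 1; lia) fun j hj => ?_
  have hj := Finset.mem_range.1 hj
  congr 1 <;> lia

end TripleT

/-- Kaneko–Tsumura conjecture on triple T-values: for all `w ≥ 4`,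
`∑_{a+b+c=w, a≥2, b,c≥1} 2ᵇ (3^{a-1} − 1) T(a,b,c) = (2/3)(w−1)(w−2) T(w)`. -/
theorem kaneko_tsumura_triple_T (w : ℕ) (hw : 4 ≤ w) :
    ∑ a ∈ Finset.Icc 2 (w - 2), ∑ b ∈ Finset.Icc 1 (w - a - 1),
      (2 : ℝ) ^ b * ((3 : ℝ) ^ (a - 1) - 1) * tValue3 a b (w - a - b)
      = 2 / 3 * ((w : ℝ) - 1) * ((w : ℝ) - 2) * tValue1 w := by
  obtain ⟨v, rfl⟩ : ∃ v, w = v + 3 := ⟨w - 3, by lia⟩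
  have hreindex := TripleT.sum_Icc_eq_sum_antidiagonal
    (F := fun a b c => (2 : ℝ) ^ b * (3 ^ (a - 1) - 1) * tValue3 a b c) (by simp) v
  refine hreindex.trans ((TripleT.sum_antidiagonal_tValue3 (by lia)).trans ?_)
  rw [Nat.cast_choose_two]
  push_cast
  ring
end

section
/- For every integer w ≥ 3, with v = w−1, ∑_{a+b=w, a≥2, b≥1} ζ(ā,b̄) = ζ(1̄,v) − ζ(1̄,v̄) + ζ(w̄). -/
open Filter

/-!
Partial fractions in `n - m`, summed over the exponents, give
`∑_{a=1}^v 1 / (nᵃ m^{v+1-a}) = (1 / mᵛ - 1 / nᵛ) / (n - m)`. Multiplying by `σⁿ τᵐ` with `τ = ±1`,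
summing over `n > m` and putting `k = n - m` yields
`∑_{a=1}^v ζ(a, v+1-a; σ, τ) = ζ(1; σ) ζ(v; στ) - ζ(v, 1; στ, τ)`.
Expanding the product by the stuffle relation and removing the term `a = 1` leaves four depth two
sums and `ζ(v+1; σ²τ)`; the two with leading argument `v` cancel when `σ = τ = -1`.

Because `ζ(1; -1)` converges only conditionally, sums are rearranged only after truncation at
`n ≤ N`. There the product `ζ(1; σ) ζ(v; στ)` appears as a convolution, whose limit is given by
Mertens' theorem.
-/

open Finset Topology

theorem sum_range_succ_eq_sum_Icc_one {M : Type*} [AddCommMonoid M] {f : ℕ → M} (hf : f 0 = 0)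
    (N : ℕ) : ∑ n ∈ range (N + 1), f n = ∑ n ∈ Icc 1 N, f n := by
  rw [Nat.range_succ_eq_Icc_zero, ← insert_Icc_add_one_left_eq_Icc N.zero_le, zero_add,
    sum_insert (by simp), hf, zero_add]

theorem sum_Icc_mul_sum_Icc {R : Type*} [CommSemiring R] (f g : ℕ → R) (N : ℕ) :
    (∑ n ∈ Icc 1 N, f n) * ∑ n ∈ Icc 1 N, g n =
      ∑ n ∈ Icc 1 N, ∑ m ∈ Ico 1 n, f n * g m + ∑ n ∈ Icc 1 N, ∑ m ∈ Ico 1 n, g n * f m +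
        ∑ n ∈ Icc 1 N, f n * g n := by
  induction N with
  | zero => simp
  | succ N ih =>
    simp only [sum_Icc_succ_top (Nat.le_add_left 1 N), Ico_add_one_right_eq_Icc, ← mul_sum,
      add_mul, mul_add, ih]
    ring

theorem sum_Icc_sum_Ico_sub {M : Type*} [AddCommMonoid M] (f : ℕ → ℕ → M) (N : ℕ) :
    ∑ n ∈ Icc 1 N, ∑ m ∈ Ico 1 n, f m (n - m) = ∑ m ∈ Icc 1 N, ∑ k ∈ Icc 1 (N - m), f m k := by
  rw [sum_sigma', sum_sigma']
  refine sum_nbij' (fun x ↦ ⟨x.2, x.1 - x.2⟩) (fun x ↦ ⟨x.1 + x.2, x.1⟩) ?_ ?_ ?_ ?_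
    (fun _ _ ↦ rfl)
  all_goals
    rintro ⟨i, j⟩ h
    simp only [mem_sigma, mem_Icc, mem_Ico] at h
    grind

theorem sum_one_div_pow_mul_pow {K : Type*} [Field K] {x y : K} (hx : x ≠ 0) (hy : y ≠ 0)
    (hxy : x ≠ y) (v : ℕ) :
    ∑ a ∈ Icc 1 v, 1 / (x ^ a * y ^ (v + 1 - a)) = (1 / y ^ v - 1 / x ^ v) / (x - y) := by
  have hxy' : x - y ≠ 0 := sub_ne_zero.2 hxy
  induction v with
  | zero => simp
  | succ v ih =>
    have hstep : ∑ a ∈ Icc 1 v, 1 / (x ^ a * y ^ (v + 1 + 1 - a)) =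
        (∑ a ∈ Icc 1 v, 1 / (x ^ a * y ^ (v + 1 - a))) / y := by
      rw [sum_div]
      refine sum_congr rfl fun a ha ↦ ?_
      rw [Nat.succ_sub (by grind), pow_succ, div_div, mul_assoc]
    rw [sum_Icc_succ_top (by omega), hstep, ih, Nat.add_sub_cancel_left]
    field_simp
    ring

/-- **Mertens' theorem** on Cauchy products. -/
theorem tendsto_sum_range_mul_sub {R : Type*} [NormedRing R] [CompleteSpace R] {c f : ℕ → R} {l : R}
    (hc : Summable fun n ↦ ‖c n‖) (hf : Tendsto f atTop (𝓝 l)) :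
    Tendsto (fun N ↦ ∑ n ∈ range (N + 1), c n * f (N - n)) atTop (𝓝 ((∑' n, c n) * l)) := by
  obtain ⟨C, hC⟩ := (Metric.isBounded_range_of_tendsto f hf).exists_norm_le
  have hlim := tendsto_tsum_of_dominated_convergence (𝓕 := atTop)
    (f := fun N n ↦ if n ∈ range (N + 1) then c n * f (N - n) else 0) (g := fun n ↦ c n * l)
    (hc.mul_right C) (fun n ↦ ?_) (.of_forall fun N n ↦ ?_)
  · rw [hc.of_norm.tsum_mul_right] at hlim
    refine hlim.congr fun N ↦ ?_
    rw [tsum_eq_sum fun n hn ↦ if_neg hn]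
    exact sum_congr rfl fun n hn ↦ if_pos hn
  · refine ((hf.comp (tendsto_sub_atTop_nat n)).const_mul (c n)).congr' ?_
    filter_upwards [eventually_ge_atTop n] with N hN
    rw [if_pos (by simpa [Nat.lt_succ_iff] using hN), Function.comp_apply]
  · have hle : ‖c n * f (N - n)‖ ≤ ‖c n‖ * C :=
      (norm_mul_le _ _).trans (by gcongr; exact hC _ ⟨_, rfl⟩)
    split_ifs
    · exact hle
    · simpa using (norm_nonneg _).trans hle

/-- The partial sums `∑_{n ≤ N} eⁿ / nˢ` of the depth one Euler sum `eulerSum1 s e`. -/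
noncomputable def eulerPartial1 (s : ℕ) (e : ℝ) (N : ℕ) : ℝ :=
  ∑ n ∈ Icc 1 N, e ^ n / (n : ℝ) ^ s

/-- The partial sums, over `N ≥ n₁ > n₂ ≥ 1`, of the depth two Euler sum `eulerSum2 s₁ s₂ e₁ e₂`. -/
noncomputable def eulerPartial2 (s₁ s₂ : ℕ) (e₁ e₂ : ℝ) (N : ℕ) : ℝ :=
  ∑ n₁ ∈ Icc 1 N, ∑ n₂ ∈ Ico 1 n₁, e₁ ^ n₁ * e₂ ^ n₂ / ((n₁ : ℝ) ^ s₁ * (n₂ : ℝ) ^ s₂)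

theorem eulerPartial2_eq_sum_mul_eulerPartial1 (s₁ s₂ : ℕ) (e₁ e₂ : ℝ) (N : ℕ) :
    eulerPartial2 s₁ s₂ e₁ e₂ N =
      ∑ n ∈ Icc 1 N, e₁ ^ n / (n : ℝ) ^ s₁ * eulerPartial1 s₂ e₂ (n - 1) := by
  refine sum_congr rfl fun n hn ↦ ?_
  have hIcc : Icc 1 (n - 1) = Ico 1 n := by
    rw [← Ico_add_one_right_eq_Icc, Nat.sub_add_cancel (mem_Icc.1 hn).1]
  simp only [eulerPartial1, hIcc, mul_sum, div_mul_div_comm]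

theorem eulerPartial1_mul_eulerPartial1 (s t : ℕ) (σ τ : ℝ) (N : ℕ) :
    eulerPartial1 s σ N * eulerPartial1 t τ N =
      eulerPartial2 s t σ τ N + eulerPartial2 t s τ σ N + eulerPartial1 (s + t) (σ * τ) N := by
  simp only [eulerPartial1, eulerPartial2, sum_Icc_mul_sum_Icc, div_mul_div_comm, mul_pow, pow_add]

theorem sum_pow_mul_pow_div_pow_mul_pow {τ : ℝ} (hτ : |τ| = 1) (σ : ℝ) (v : ℕ) {m n : ℕ}
    (hm : 1 ≤ m) (hmn : m < n) :
    ∑ a ∈ Icc 1 v, σ ^ n * τ ^ m / ((n : ℝ) ^ a * (m : ℝ) ^ (v + 1 - a)) =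
      (σ * τ) ^ m / (m : ℝ) ^ v * (σ ^ (n - m) / ((n - m : ℕ) : ℝ) ^ 1) -
        (σ * τ) ^ n * τ ^ (n - m) / ((n : ℝ) ^ v * ((n - m : ℕ) : ℝ) ^ 1) := by
  obtain ⟨k, rfl⟩ := Nat.exists_eq_add_of_le hmn.le
  have hm0 : (m : ℝ) ≠ 0 := by positivity
  have hk0 : (k : ℝ) ≠ 0 := by norm_cast; omega
  have hn0 : (m : ℝ) + k ≠ 0 := by positivity
  have hτ_cancel : τ ^ (m + k) * τ ^ k = τ ^ m := by
    rw [pow_add, mul_assoc, ← mul_pow, ← abs_mul_abs_self, hτ, one_mul, one_pow, mul_one]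
  simp only [div_eq_mul_one_div (σ ^ (m + k) * τ ^ m), ← mul_sum, Nat.cast_add]
  rw [sum_one_div_pow_mul_pow hn0 hm0 (by simpa using hk0), Nat.add_sub_cancel_left,
    add_sub_cancel_left, mul_pow σ τ (m + k), mul_assoc (σ ^ (m + k)) _ (τ ^ k), hτ_cancel, mul_pow]
  field_simp
  ring

theorem sum_eulerPartial2_eq_convolution {τ : ℝ} (hτ : |τ| = 1) (σ : ℝ) (v N : ℕ) :
    ∑ a ∈ Icc 1 v, eulerPartial2 a (v + 1 - a) σ τ N =
      ∑ m ∈ Icc 1 N, (σ * τ) ^ m / (m : ℝ) ^ v * eulerPartial1 1 σ (N - m) -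
        eulerPartial2 v 1 (σ * τ) τ N := by
  have hreflect (n : ℕ) : ∑ m ∈ Ico 1 n,
      (σ * τ) ^ n * τ ^ (n - m) / ((n : ℝ) ^ v * ((n - m : ℕ) : ℝ) ^ 1) =
        ∑ m ∈ Ico 1 n, (σ * τ) ^ n * τ ^ m / ((n : ℝ) ^ v * (m : ℝ) ^ 1) := by
    simpa only [Nat.add_sub_cancel_left, Nat.add_sub_cancel] using sum_Ico_reflect
      (fun m ↦ (σ * τ) ^ n * τ ^ m / ((n : ℝ) ^ v * (m : ℝ) ^ 1)) 1 n.le_succ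
  calc ∑ a ∈ Icc 1 v, eulerPartial2 a (v + 1 - a) σ τ N
      = ∑ n ∈ Icc 1 N, ∑ m ∈ Ico 1 n, ∑ a ∈ Icc 1 v,
          σ ^ n * τ ^ m / ((n : ℝ) ^ a * (m : ℝ) ^ (v + 1 - a)) := by
        simp only [eulerPartial2]
        rw [sum_comm]
        exact sum_congr rfl fun n _ ↦ sum_comm
    _ = ∑ n ∈ Icc 1 N, ∑ m ∈ Ico 1 n,
            (σ * τ) ^ m / (m : ℝ) ^ v * (σ ^ (n - m) / ((n - m : ℕ) : ℝ) ^ 1) -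
          ∑ n ∈ Icc 1 N, ∑ m ∈ Ico 1 n,
            (σ * τ) ^ n * τ ^ (n - m) / ((n : ℝ) ^ v * ((n - m : ℕ) : ℝ) ^ 1) := by
        simp only [← sum_sub_distrib]
        exact sum_congr rfl fun n _ ↦ sum_congr rfl fun m hm ↦
          sum_pow_mul_pow_div_pow_mul_pow hτ σ v (mem_Ico.1 hm).1 (mem_Ico.1 hm).2
    _ = ∑ m ∈ Icc 1 N, (σ * τ) ^ m / (m : ℝ) ^ v * eulerPartial1 1 σ (N - m) -
          eulerPartial2 v 1 (σ * τ) τ N := by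
        rw [sum_Icc_sum_Ico_sub
          fun m k ↦ (σ * τ) ^ m / (m : ℝ) ^ v * (σ ^ k / (k : ℝ) ^ 1)]
        simp only [hreflect, eulerPartial1, eulerPartial2, mul_sum]

theorem tendsto_sum_Icc_one {M : Type*} [AddCommMonoid M] [TopologicalSpace M] {f : ℕ → M}
    (hf : Summable f) (hf0 : f 0 = 0) :
    Tendsto (fun N ↦ ∑ n ∈ Icc 1 N, f n) atTop (𝓝 (∑' n, f n)) := by
  simp only [← sum_range_succ_eq_sum_Icc_one hf0]
  exact hf.hasSum.tendsto_sum_nat.comp (tendsto_add_atTop_nat 1)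

theorem abs_pow_div_pow_le {e : ℝ} (he : |e| ≤ 1) (n s : ℕ) :
    |e ^ n / (n : ℝ) ^ s| ≤ 1 / (n : ℝ) ^ s := by
  rw [abs_div, abs_pow, abs_of_nonneg (by positivity : (0 : ℝ) ≤ (n : ℝ) ^ s)]
  gcongr
  exact pow_le_one₀ (abs_nonneg e) he

theorem summable_norm_pow_div_pow {e : ℝ} (he : |e| ≤ 1) {s : ℕ} (hs : 2 ≤ s) :
    Summable fun n : ℕ ↦ ‖e ^ n / (n : ℝ) ^ s‖ :=
  .of_nonneg_of_le (fun _ ↦ norm_nonneg _) (fun n ↦ abs_pow_div_pow_le he n s)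
    (Real.summable_one_div_nat_pow.2 hs)

-- The sum over all of `ℕ` is harmless: division by zero makes its term at `n = 0` vanish.
theorem tsum_pow_div_pow {e : ℝ} (he : |e| ≤ 1) {s : ℕ} (hs : 2 ≤ s) :
    ∑' n : ℕ, e ^ n / (n : ℝ) ^ s = eulerSum1 s e := by
  have h : Tendsto (eulerPartial1 s e) atTop (𝓝 (∑' n : ℕ, e ^ n / (n : ℝ) ^ s)) :=
    tendsto_sum_Icc_one (summable_norm_pow_div_pow he hs).of_norm (by simp; omega)
  exact h.limUnder_eq.symm

theorem exists_tendsto_eulerPartial1_of_ne_one {e : ℝ} (he : |e| ≤ 1) (he1 : e ≠ 1) {s : ℕ}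
    (hs : 1 ≤ s) : ∃ l, Tendsto (eulerPartial1 s e) atTop (𝓝 l) := by
  have hanti : Antitone fun i : ℕ ↦ (((i : ℝ) + 1) ^ s)⁻¹ := fun i j hij ↦ by
    dsimp only
    gcongr
  have hzero : Tendsto (fun i : ℕ ↦ (((i : ℝ) + 1) ^ s)⁻¹) atTop (𝓝 0) :=
    ((tendsto_pow_atTop (by omega)).comp
      (tendsto_atTop_add_const_right _ 1 tendsto_natCast_atTop_atTop)).inv_tendsto_atTop
  have hbound (n : ℕ) : ‖∑ i ∈ range n, e ^ (i + 1)‖ ≤ 2 / |e - 1| := by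
    simp only [pow_succ, ← sum_mul, geom_sum_eq he1, Real.norm_eq_abs, abs_mul, abs_div]
    have hpow : |e ^ n - 1| ≤ 2 := by
      calc |e ^ n - 1| ≤ |e| ^ n + 1 := by simpa using abs_sub (e ^ n) 1
        _ ≤ 2 := by linarith [pow_le_one₀ (n := n) (abs_nonneg e) he]
    calc |e ^ n - 1| / |e - 1| * |e| ≤ 2 / |e - 1| * 1 := by gcongr
      _ = 2 / |e - 1| := mul_one _
  obtain ⟨l, hl⟩ := cauchySeq_tendsto_of_complete <|
    hanti.cauchySeq_series_mul_of_tendsto_zero_of_bounded hzero hbound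
  refine ⟨l, hl.congr fun N ↦ ?_⟩
  rw [eulerPartial1, ← Ico_add_one_right_eq_Icc,
    ← sum_Ico_add' (fun n : ℕ ↦ e ^ n / (n : ℝ) ^ s) 0 N 1, ← range_eq_Ico]
  refine sum_congr rfl fun i _ ↦ ?_
  rw [smul_eq_mul, div_eq_inv_mul, Nat.cast_add_one]

theorem tendsto_eulerPartial1 {s : ℕ} {e : ℝ} (he : |e| ≤ 1) (hs : 1 ≤ s) (hse : 2 ≤ s ∨ e ≠ 1) :
    Tendsto (eulerPartial1 s e) atTop (𝓝 (eulerSum1 s e)) := by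
  refine tendsto_nhds_limUnder ?_
  obtain hs2 | he1 := hse
  · exact ⟨_, tendsto_sum_Icc_one (summable_norm_pow_div_pow he hs2).of_norm (by simp; omega)⟩
  · exact exists_tendsto_eulerPartial1_of_ne_one he he1 hs

theorem sum_Icc_one_div_le_two_mul_sqrt (N : ℕ) : ∑ n ∈ Icc 1 N, 1 / (n : ℝ) ≤ 2 * √N := by
  obtain rfl | hN := N.eq_zero_or_pos
  · simp
  have hN' : (0 : ℝ) < N := by exact_mod_cast hN
  calc ∑ n ∈ Icc 1 N, 1 / (n : ℝ) = (harmonic N : ℝ) := by simp [harmonic_eq_sum_Icc]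
    _ ≤ 1 + Real.log N := harmonic_le_one_add_log N
    _ = 1 + 2 * Real.log √N := by rw [Real.log_sqrt hN'.le]; ring
    _ ≤ 2 * √N := by linarith [Real.log_le_sub_one_of_pos (Real.sqrt_pos.2 hN')]

theorem abs_eulerPartial1_le_two_mul_sqrt {s : ℕ} {e : ℝ} (he : |e| ≤ 1) (hs : 1 ≤ s) (N : ℕ) :
    |eulerPartial1 s e N| ≤ 2 * √N := by
  refine (abs_sum_le_sum_abs _ _).trans
    ((sum_le_sum fun n hn ↦ ?_).trans (sum_Icc_one_div_le_two_mul_sqrt N))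
  have hn : (1 : ℝ) ≤ n := by exact_mod_cast (mem_Icc.1 hn).1
  exact (abs_pow_div_pow_le he n s).trans (by gcongr; exact le_self_pow₀ hn (by omega))

theorem tendsto_eulerPartial2_of_two_le_left {s₁ s₂ : ℕ} {e₁ e₂ : ℝ} (he₁ : |e₁| ≤ 1)
    (he₂ : |e₂| ≤ 1) (hs₁ : 2 ≤ s₁) (hs₂ : 1 ≤ s₂) :
    Tendsto (eulerPartial2 s₁ s₂ e₁ e₂) atTop (𝓝 (eulerSum2 s₁ s₂ e₁ e₂)) := by
  -- The inner sum is `O(√n)`, so the terms of the outer one are `O(n ^ (-3 / 2))`.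
  have hle (n : ℕ) : |e₁ ^ n / (n : ℝ) ^ s₁ * eulerPartial1 s₂ e₂ (n - 1)| ≤
      2 * ((n : ℝ) ^ (3 / 2 : ℝ))⁻¹ := by
    obtain rfl | hn := n.eq_zero_or_pos
    · simp [eulerPartial1]
    have hn1 : (1 : ℝ) ≤ n := by exact_mod_cast hn
    calc |e₁ ^ n / (n : ℝ) ^ s₁ * eulerPartial1 s₂ e₂ (n - 1)|
        ≤ 1 / (n : ℝ) ^ 2 * (2 * √n) := by
          rw [abs_mul]
          gcongr
          · exact (abs_pow_div_pow_le he₁ n s₁).trans (by gcongr)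
          · exact (abs_eulerPartial1_le_two_mul_sqrt he₂ hs₂ _).trans (by gcongr; omega)
      _ = 2 * ((n : ℝ) ^ (3 / 2 : ℝ))⁻¹ := by
          have hsq : (n : ℝ) ^ 2 = (n : ℝ) ^ (3 / 2 : ℝ) * √n := by
            rw [Real.sqrt_eq_rpow, ← Real.rpow_add (by positivity), ← Real.rpow_natCast]
            norm_num
          rw [hsq]
          field_simp
  have hsum : Summable fun n : ℕ ↦ e₁ ^ n / (n : ℝ) ^ s₁ * eulerPartial1 s₂ e₂ (n - 1) :=
    .of_norm_bounded ((Real.summable_nat_rpow_inv.2 (by norm_num)).mul_left 2) hle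
  exact tendsto_nhds_limUnder ⟨_, (tendsto_sum_Icc_one hsum (by simp [eulerPartial1])).congr
    fun N ↦ (eulerPartial2_eq_sum_mul_eulerPartial1 s₁ s₂ e₁ e₂ N).symm⟩

theorem tendsto_eulerPartial2_of_two_le_right {s₁ s₂ : ℕ} {e₁ e₂ : ℝ} (he₁ : |e₁| ≤ 1)
    (he₂ : |e₂| ≤ 1) (hs₁ : 1 ≤ s₁) (hse₁ : 2 ≤ s₁ ∨ e₁ ≠ 1) (hs₂ : 2 ≤ s₂) :
    Tendsto (eulerPartial2 s₁ s₂ e₁ e₂) atTop (𝓝 (eulerSum2 s₁ s₂ e₁ e₂)) := by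
  have he : |e₁ * e₂| ≤ 1 := by rw [abs_mul]; exact mul_le_one₀ he₁ (abs_nonneg _) he₂
  -- The stuffle relation reduces to sums whose leading exponent is at least two.
  have hlim := (((tendsto_eulerPartial1 he₁ hs₁ hse₁).mul
    (tendsto_eulerPartial1 he₂ (by omega) (.inl hs₂))).sub
    (tendsto_eulerPartial2_of_two_le_left he₂ he₁ hs₂ hs₁)).sub
    (tendsto_eulerPartial1 (s := s₁ + s₂) he (by omega) (.inl (by omega)))
  refine tendsto_nhds_limUnder ⟨_, hlim.congr fun N ↦ ?_⟩
  rw [eulerPartial1_mul_eulerPartial1]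
  ring

theorem eulerSum1_mul_eulerSum1 {s t : ℕ} {σ τ : ℝ} (hσ : |σ| ≤ 1) (hτ : |τ| ≤ 1) (hs : 1 ≤ s)
    (hsσ : 2 ≤ s ∨ σ ≠ 1) (ht : 2 ≤ t) :
    eulerSum1 s σ * eulerSum1 t τ =
      eulerSum2 s t σ τ + eulerSum2 t s τ σ + eulerSum1 (s + t) (σ * τ) := by
  have hστ : |σ * τ| ≤ 1 := by rw [abs_mul]; exact mul_le_one₀ hσ (abs_nonneg _) hτ
  refine tendsto_nhds_unique (((tendsto_eulerPartial1 hσ hs hsσ).mul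
    (tendsto_eulerPartial1 hτ (by omega) (.inl ht))).congr
      fun N ↦ eulerPartial1_mul_eulerPartial1 s t σ τ N) ?_
  exact ((tendsto_eulerPartial2_of_two_le_right hσ hτ hs hsσ ht).add
    (tendsto_eulerPartial2_of_two_le_left hτ hσ ht hs)).add
    (tendsto_eulerPartial1 hστ (by omega) (.inl (by omega)))

theorem sum_eulerSum2_eq_mul_sub {σ τ : ℝ} (hσ : |σ| ≤ 1) (hσ1 : σ ≠ 1) (hτ : |τ| = 1) {v : ℕ}
    (hv : 2 ≤ v) :
    ∑ a ∈ Icc 1 v, eulerSum2 a (v + 1 - a) σ τ =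
      eulerSum1 1 σ * eulerSum1 v (σ * τ) - eulerSum2 v 1 (σ * τ) τ := by
  have hστ : |σ * τ| ≤ 1 := by rwa [abs_mul, hτ, mul_one]
  have hleft : Tendsto (fun N ↦ ∑ a ∈ Icc 1 v, eulerPartial2 a (v + 1 - a) σ τ N) atTop
      (𝓝 (∑ a ∈ Icc 1 v, eulerSum2 a (v + 1 - a) σ τ)) := by
    refine tendsto_finsetSum _ fun a ha ↦ ?_
    obtain ⟨ha1, hav⟩ := mem_Icc.1 ha
    obtain rfl | ha2 := ha1.eq_or_lt
    · exact tendsto_eulerPartial2_of_two_le_right hσ hτ.le le_rfl (.inr hσ1) (by omega)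
    · exact tendsto_eulerPartial2_of_two_le_left hσ hτ.le ha2 (by omega)
  have hconv := tendsto_sum_range_mul_sub (summable_norm_pow_div_pow hστ hv)
    (tendsto_eulerPartial1 hσ le_rfl (.inr hσ1))
  rw [tsum_pow_div_pow hστ hv, mul_comm (eulerSum1 v _)] at hconv
  refine tendsto_nhds_unique hleft ((hconv.sub (tendsto_eulerPartial2_of_two_le_left hστ hτ.le hv
    le_rfl)).congr fun N ↦ ?_)
  rw [sum_eulerPartial2_eq_convolution hτ,
    sum_range_succ_eq_sum_Icc_one (by simp; omega)]

theorem sum_zeta_bar_bar_general {σ τ : ℝ} (hσ : |σ| ≤ 1) (hσ1 : σ ≠ 1) (hτ : |τ| = 1) {w : ℕ}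
    (hw : 3 ≤ w) :
    ∑ a ∈ Icc 2 (w - 1), eulerSum2 a (w - a) σ τ =
      eulerSum2 1 (w - 1) σ (σ * τ) - eulerSum2 1 (w - 1) σ τ +
        (eulerSum2 (w - 1) 1 (σ * τ) σ - eulerSum2 (w - 1) 1 (σ * τ) τ) +
        eulerSum1 w (σ ^ 2 * τ) := by
  obtain ⟨v, rfl⟩ : ∃ v, w = v + 1 := ⟨w - 1, by omega⟩
  have hστ : |σ * τ| ≤ 1 := by rwa [abs_mul, hτ, mul_one]
  have hsum := sum_eulerSum2_eq_mul_sub hσ hσ1 hτ (v := v) (by omega)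
  rw [eulerSum1_mul_eulerSum1 hσ hστ le_rfl (.inr hσ1) (by omega), Nat.add_comm 1 v,
    ← mul_assoc, ← sq, ← add_sum_Ioc_eq_sum_Icc (by omega), ← Icc_add_one_left_eq_Ioc,
    one_add_one_eq_two, Nat.add_sub_cancel] at hsum
  rw [Nat.add_sub_cancel]
  linear_combination hsum

/-- For `w ≥ 3`, with `v = w − 1`: `∑_{a+b=w, a≥2} ζ(ā,b̄) = ζ(1̄,v) − ζ(1̄,v̄) + ζ(w̄)`. -/
theorem sum_zeta_bar_bar (w : ℕ) (hw : 3 ≤ w) :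
    ∑ a ∈ Finset.Icc 2 (w - 1), eulerSum2 a (w - a) (-1) (-1)
      = eulerSum2 1 (w - 1) (-1) 1 - eulerSum2 1 (w - 1) (-1) (-1) + eulerSum1 w (-1) := by
  simpa using sum_zeta_bar_bar_general (σ := -1) (τ := -1) (by simp) (by norm_num) (by simp) hw
end

section
/- For every integer w ≥ 3, with v = w−1, ∑_{a+b=w, a≥2, b≥1} ζ(a,b̄) = ζ(v̄,1) − ζ(v̄,1̄) + ζ(w̄). -/
open Filter

/-!
Write the inner index of `ζ(a, b; 1, e)` as `m` and the outer one as `m + k`. Summing the geometric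
progression over `a + b = w` and splitting into partial fractions gives, with `v = w - 1`,
`∑ eᵐ / ((m + k)ᵃ mᵇ) = eᵐ / mᵛ * (1 / k - 1 / (m + k)) - eᵐ / ((m + k)ᵛ k)`.
All these double series converge absolutely. The last term is the summand of `ζ(v, 1; e, e⁻¹)` with
`m` and `k` exchanged; in the first one the sum over `k` telescopes to the `m`-th harmonic number,
which leaves `ζ(v, 1; e, 1) + ζ(w; e)`.
-/

open Finset Topology

theorem hasSum_sub_add_of_antitone {f : ℕ → ℝ} (hf : Antitone f) (hf₀ : Tendsto f atTop (𝓝 0))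
    (m : ℕ) : HasSum (fun k => f k - f (k + m)) (∑ k ∈ range m, f k) := by
  rw [hasSum_iff_tendsto_nat_of_nonneg fun k => sub_nonneg.2 (hf (Nat.le_add_right k m))]
  have partial_sum (N : ℕ) : ∑ k ∈ range m, f k - ∑ k ∈ range m, f (N + k)
      = ∑ k ∈ range N, (f k - f (k + m)) := by
    have hNm := sum_range_add f N m
    have hmN := sum_range_add f m N
    simp only [add_comm m] at hmN
    rw [sum_sub_distrib]
    linarith
  have boundary : Tendsto (fun N => ∑ k ∈ range m, f (N + k)) atTop (𝓝 0) := by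
    simpa using tendsto_finsetSum (range m) fun k _ => (tendsto_add_atTop_iff_nat k).2 hf₀
  simpa using (boundary.const_sub (∑ k ∈ range m, f k)).congr partial_sum

theorem hasSum_sum_antidiagonal {A M : Type*} [AddCommMonoid A] [HasAntidiagonal A]
    [AddCommMonoid M] [TopologicalSpace M] [ContinuousAdd M] [RegularSpace M]
    {f : A × A → M} {a : M} (hf : HasSum f a) :
    HasSum (fun n => ∑ p ∈ antidiagonal n, f p) a :=
  (HasAntidiagonal.sigmaAntidiagonalEquivProd.hasSum_iff.2 hf).sigma fun n =>
    (antidiagonal n).hasSum f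

theorem tendsto_sum_Icc_one_of_hasSum {M : Type*} [AddCommMonoid M] [TopologicalSpace M]
    {f : ℕ → M} {a : M} (hf : HasSum f a) (hf₀ : f 0 = 0) :
    Tendsto (fun N => ∑ n ∈ Icc 1 N, f n) atTop (𝓝 a) := by
  refine ((tendsto_add_atTop_iff_nat 1).2 hf.tendsto_sum_nat).congr fun N => ?_
  rw [range_eq_Ico, sum_eq_sum_Ico_succ_bot N.succ_pos, hf₀, zero_add]
  rfl

theorem sum_Icc_one_div_add_pow_mul_pow {K : Type*} [Field K] {m k : K} (hm : m ≠ 0) (hk : k ≠ 0)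
    (hmk : m + k ≠ 0) {w : ℕ} (hw : 2 ≤ w) :
    ∑ a ∈ Icc 2 (w - 1), 1 / ((m + k) ^ a * m ^ (w - a))
      = 1 / m ^ (w - 1) * (1 / k - 1 / (m + k)) - 1 / ((m + k) ^ (w - 1) * k) := by
  obtain ⟨t, rfl⟩ := Nat.exists_eq_add_of_le' hw
  have inv_sub : (m + k)⁻¹ - m⁻¹ = -(k * ((m + k)⁻¹ * m⁻¹)) := by field_simp; ring
  have inv_ne : (m + k)⁻¹ ≠ m⁻¹ := by simpa using hk
  calc ∑ a ∈ Icc 2 (t + 1), 1 / ((m + k) ^ a * m ^ (t + 2 - a))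
      = m⁻¹ * ∑ a ∈ Ico 2 (t + 2), (m + k)⁻¹ ^ a * m⁻¹ ^ (t + 2 - 1 - a) := by
        rw [mul_sum]
        refine sum_congr rfl fun a ha => ?_
        rw [show t + 2 - a = t + 2 - 1 - a + 1 by grind]
        simp only [inv_pow, pow_succ]
        field_simp
    _ = 1 / m ^ (t + 1) * (1 / k - 1 / (m + k)) - 1 / ((m + k) ^ (t + 1) * k) := by
        rw [geom_sum₂_Ico inv_ne hw, inv_sub, Nat.add_sub_cancel]
        simp only [inv_pow, pow_succ]
        field_simp
        ring

theorem hasSum_one_div_sub_one_div_add (m : ℕ) :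
    HasSum (fun k : ℕ => 1 / ((k : ℝ) + 1) - 1 / ((m : ℝ) + k + 1))
      (∑ k ∈ range m, 1 / ((k : ℝ) + 1)) := by
  have antitone : Antitone fun k : ℕ => 1 / ((k : ℝ) + 1) := fun _ _ h => by
    dsimp only
    gcongr
  refine (hasSum_sub_add_of_antitone antitone tendsto_one_div_add_atTop_nhds_zero_nat m).congr_fun
    fun k => ?_
  rw [Nat.cast_add, add_comm (m : ℝ)]

theorem summable_one_div_add_sq_mul :
    Summable fun p : ℕ × ℕ => 1 / (((p.1 : ℝ) + p.2 + 2) ^ 2 * (p.1 + 1)) := by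
  have hs : Summable fun n : ℕ => 1 / ((n : ℝ) + 1) ^ (3 / 2 : ℝ) := by
    simpa using (summable_nat_add_iff 1).2
      (Real.summable_one_div_nat_rpow.2 (by norm_num : (1 : ℝ) < 3 / 2))
  refine (hs.mul_of_nonneg hs (fun _ => by positivity) fun _ => by positivity).of_nonneg_of_le
    (fun _ => by positivity) fun ⟨i, j⟩ => ?_
  have hi : (0 : ℝ) < i + 1 := by positivity
  have hn : (0 : ℝ) < i + j + 2 := by positivity
  rw [one_div_mul_one_div]
  refine one_div_le_one_div_of_le (by positivity) ?_
  calc ((i : ℝ) + 1) ^ (3 / 2 : ℝ) * ((j : ℝ) + 1) ^ (3 / 2 : ℝ)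
      = ((i : ℝ) + 1) ^ (1 / 2 : ℝ) * ((j : ℝ) + 1) ^ (3 / 2 : ℝ) * (i + 1) := by
        rw [show (3 / 2 : ℝ) = 1 / 2 + 1 by norm_num, Real.rpow_add_one hi.ne']
        ring
    _ ≤ ((i : ℝ) + j + 2) ^ (1 / 2 : ℝ) * ((i : ℝ) + j + 2) ^ (3 / 2 : ℝ) * (i + 1) := by
        gcongr <;> linarith
    _ = ((i : ℝ) + j + 2) ^ 2 * (i + 1) := by
        rw [← Real.rpow_add hn, ← Real.rpow_natCast]
        norm_num

/-- The summand of `eulerSum2 s₁ s₂ e₁ e₂` at `n₂ = p.1 + 1`, `n₁ = p.1 + p.2 + 2`. Taking `n₂` and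
the gap `n₁ - n₂`, both shifted by one, as coordinates turns the region `n₁ > n₂ ≥ 1` into `ℕ × ℕ`,
so that the double series is an unconditional sum over a product. -/
noncomputable def eulerTerm2 (s₁ s₂ : ℕ) (e₁ e₂ : ℝ) (p : ℕ × ℕ) : ℝ :=
  e₁ ^ (p.1 + p.2 + 2) * e₂ ^ (p.1 + 1) / (((p.1 : ℝ) + p.2 + 2) ^ s₁ * ((p.1 : ℝ) + 1) ^ s₂)

theorem hasSum_eulerSum1 {s : ℕ} {e : ℝ} (hs : 2 ≤ s) (he : |e| ≤ 1) :
    HasSum (fun n : ℕ => e ^ n / (n : ℝ) ^ s) (eulerSum1 s e) := by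
  have summable : Summable fun n : ℕ => e ^ n / (n : ℝ) ^ s := by
    refine .of_norm_bounded (Real.summable_one_div_nat_pow.2 hs) fun n => ?_
    rw [norm_div, norm_pow, norm_pow, Real.norm_eq_abs, Real.norm_natCast]
    gcongr
    exact pow_le_one₀ (abs_nonneg e) he
  convert summable.hasSum
  exact (tendsto_sum_Icc_one_of_hasSum summable.hasSum (by simp [show s ≠ 0 by omega])).limUnder_eq

section eulerSum2

variable {s₁ s₂ : ℕ} {e₁ e₂ : ℝ}

theorem summable_eulerTerm2 (hs₁ : 2 ≤ s₁) (hs₂ : 1 ≤ s₂) (he₁ : |e₁| ≤ 1) (he : |e₁ * e₂| ≤ 1) :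
    Summable (eulerTerm2 s₁ s₂ e₁ e₂) := by
  refine .of_norm_bounded summable_one_div_add_sq_mul fun ⟨i, j⟩ => ?_
  have numerator : |e₁ ^ (i + j + 2) * e₂ ^ (i + 1)| ≤ 1 := by
    rw [show e₁ ^ (i + j + 2) * e₂ ^ (i + 1) = e₁ ^ (j + 1) * (e₁ * e₂) ^ (i + 1) by ring,
      abs_mul, abs_pow, abs_pow]
    exact mul_le_one₀ (pow_le_one₀ (abs_nonneg _) he₁) (by positivity)
      (pow_le_one₀ (abs_nonneg _) he)
  rw [eulerTerm2, norm_div, Real.norm_eq_abs, Real.norm_of_nonneg (by positivity)]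
  gcongr
  · linarith
  · exact le_self_pow₀ (by simp) (by omega)

theorem sum_antidiagonal_eulerTerm2 (n : ℕ) :
    ∑ p ∈ antidiagonal n, eulerTerm2 s₁ s₂ e₁ e₂ p = ∑ n₂ ∈ Ico 1 (n + 2),
      e₁ ^ (n + 2) * e₂ ^ n₂ / (((n + 2 : ℕ) : ℝ) ^ s₁ * (n₂ : ℝ) ^ s₂) := by
  rw [Nat.sum_antidiagonal_eq_sum_range_succ_mk, sum_Ico_eq_sum_range]
  refine sum_congr rfl fun i hi => ?_
  obtain ⟨j, rfl⟩ := Nat.exists_eq_add_of_le (mem_range_succ_iff.1 hi)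
  simp only [eulerTerm2, Nat.add_sub_cancel_left]
  push_cast
  ring_nf

theorem hasSum_sum_Ico_of_hasSum_eulerTerm2 {a : ℝ} (h : HasSum (eulerTerm2 s₁ s₂ e₁ e₂) a) :
    HasSum (fun n₁ : ℕ => ∑ n₂ ∈ Ico 1 n₁,
      e₁ ^ n₁ * e₂ ^ n₂ / ((n₁ : ℝ) ^ s₁ * (n₂ : ℝ) ^ s₂)) a := by
  rw [← hasSum_nat_add_iff' 2]
  simpa [sum_range_succ, sum_antidiagonal_eulerTerm2] using hasSum_sum_antidiagonal h

theorem hasSum_eulerTerm2 (hs₁ : 2 ≤ s₁) (hs₂ : 1 ≤ s₂) (he₁ : |e₁| ≤ 1) (he : |e₁ * e₂| ≤ 1) :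
    HasSum (eulerTerm2 s₁ s₂ e₁ e₂) (eulerSum2 s₁ s₂ e₁ e₂) := by
  have summable := summable_eulerTerm2 hs₁ hs₂ he₁ he
  convert summable.hasSum
  exact (tendsto_sum_Icc_one_of_hasSum (hasSum_sum_Ico_of_hasSum_eulerTerm2 summable.hasSum)
    (by simp)).limUnder_eq

end eulerSum2

theorem sum_Icc_eulerTerm2_one_left {e : ℝ} (he₀ : e ≠ 0) {w : ℕ} (hw : 2 ≤ w) (i j : ℕ) :
    ∑ a ∈ Icc 2 (w - 1), eulerTerm2 a (w - a) 1 e (i, j)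
      = e ^ (i + 1) / ((i : ℝ) + 1) ^ (w - 1) * (1 / ((j : ℝ) + 1) - 1 / ((i : ℝ) + 1 + j + 1))
        - eulerTerm2 (w - 1) 1 e e⁻¹ (j, i) := by
  have hsum : (i : ℝ) + 1 + (j + 1) ≠ 0 := by positivity
  have partial_fractions := sum_Icc_one_div_add_pow_mul_pow (Nat.cast_add_one_ne_zero i)
    (Nat.cast_add_one_ne_zero j) hsum hw
  have numerator : e ^ (j + i + 2) * e⁻¹ ^ (j + 1) = e ^ (i + 1) := by
    rw [show j + i + 2 = i + 1 + (j + 1) by ring, pow_add, mul_assoc, ← mul_pow,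
      mul_inv_cancel₀ he₀, one_pow, mul_one]
  calc ∑ a ∈ Icc 2 (w - 1), eulerTerm2 a (w - a) 1 e (i, j)
      = e ^ (i + 1) * ∑ a ∈ Icc 2 (w - 1),
          1 / (((i : ℝ) + 1 + (j + 1)) ^ a * ((i : ℝ) + 1) ^ (w - a)) := by
        rw [mul_sum]
        refine sum_congr rfl fun a _ => ?_
        rw [eulerTerm2]
        ring_nf
    _ = _ := by
        rw [partial_fractions, eulerTerm2, numerator]
        ring_nf

theorem hasSum_sum_eulerTerm2_add_eulerTerm2 {e : ℝ} (he₀ : e ≠ 0) {w : ℕ} (hw : 2 ≤ w) (i : ℕ) :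
    HasSum (fun j => ∑ a ∈ Icc 2 (w - 1), eulerTerm2 a (w - a) 1 e (i, j)
        + eulerTerm2 (w - 1) 1 e e⁻¹ (j, i))
      (e ^ (i + 1) / ((i : ℝ) + 1) ^ (w - 1) * ∑ k ∈ range (i + 1), 1 / ((k : ℝ) + 1)) := by
  refine ((hasSum_one_div_sub_one_div_add (i + 1)).mul_left _).congr_fun fun j => ?_
  rw [sum_Icc_eulerTerm2_one_left he₀ hw, sub_add_cancel, Nat.cast_add_one]

theorem hasSum_pow_div_mul_harmonic {s : ℕ} {e : ℝ} (hs : 2 ≤ s) (he : |e| ≤ 1) :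
    HasSum (fun n : ℕ => e ^ (n + 1) / ((n : ℝ) + 1) ^ s * ∑ k ∈ range (n + 1), 1 / ((k : ℝ) + 1))
      (eulerSum2 s 1 e 1 + eulerSum1 (s + 1) e) := by
  have below_diagonal := hasSum_sum_Ico_of_hasSum_eulerTerm2
    (hasSum_eulerTerm2 hs le_rfl he (by simpa using he : |e * 1| ≤ 1))
  have diagonal := hasSum_eulerSum1 (s := s + 1) (by omega) he
  have shifted := (hasSum_nat_add_iff' 1).2 (below_diagonal.add diagonal)
  simp only [sum_range_one, Nat.cast_add_one, Ico_eq_empty_of_le zero_le_one, sum_empty,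
    Nat.cast_zero, zero_pow s.succ_ne_zero, div_zero, add_zero, sub_zero] at shifted
  refine shifted.congr_fun fun n => ?_
  rw [sum_range_succ, mul_add, mul_sum, sum_Ico_eq_sum_range, Nat.add_sub_cancel, pow_succ _ s,
    div_mul_div_comm, mul_one]
  congr 1
  refine sum_congr rfl fun k _ => ?_
  rw [div_mul_div_comm, one_pow, pow_one, Nat.cast_add, Nat.cast_one, add_comm (1 : ℝ)]

/-- At `e = 1` this is Euler's sum formula `∑ ζ(a, b) = ζ(w)`. -/
theorem sum_zeta_unbar_bar_general (w : ℕ) (hw : 3 ≤ w) {e : ℝ} (he₀ : e ≠ 0) (he : |e| ≤ 1) :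
    ∑ a ∈ Icc 2 (w - 1), eulerSum2 a (w - a) 1 e
      = eulerSum2 (w - 1) 1 e 1 - eulerSum2 (w - 1) 1 e e⁻¹ + eulerSum1 w e := by
  have hv : 2 ≤ w - 1 := by omega
  have exponent_sum : HasSum (fun p : ℕ × ℕ => ∑ a ∈ Icc 2 (w - 1), eulerTerm2 a (w - a) 1 e p)
      (∑ a ∈ Icc 2 (w - 1), eulerSum2 a (w - a) 1 e) :=
    hasSum_sum fun a ha => hasSum_eulerTerm2 (mem_Icc.1 ha).1 (by grind) abs_one.le (by simpa)
  have swapped : HasSum (fun p : ℕ × ℕ => eulerTerm2 (w - 1) 1 e e⁻¹ p.swap)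
      (eulerSum2 (w - 1) 1 e e⁻¹) :=
    (Equiv.prodComm ℕ ℕ).hasSum_iff.2 (hasSum_eulerTerm2 hv le_rfl he (by simp [he₀]))
  have telescoped := (exponent_sum.add swapped).prod_fiberwise
    (hasSum_sum_eulerTerm2_add_eulerTerm2 he₀ (by omega : 2 ≤ w))
  have harmonic_weighted := hasSum_pow_div_mul_harmonic hv he
  rw [Nat.sub_add_cancel (by omega : 1 ≤ w)] at harmonic_weighted
  linarith [telescoped.unique harmonic_weighted]

/-- For `w ≥ 3`, with `v = w − 1`: `∑_{a+b=w, a≥2} ζ(a,b̄) = ζ(v̄,1) − ζ(v̄,1̄) + ζ(w̄)`. -/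
theorem sum_zeta_unbar_bar (w : ℕ) (hw : 3 ≤ w) :
    ∑ a ∈ Finset.Icc 2 (w - 1), eulerSum2 a (w - a) 1 (-1)
      = eulerSum2 (w - 1) 1 (-1) 1 - eulerSum2 (w - 1) 1 (-1) (-1) + eulerSum1 w (-1) := by
  simpa [inv_neg] using sum_zeta_unbar_bar_general w hw (e := -1) (by simp) (by simp)
end

section
/- For every integer w ≥ 3, with v = w−1, the double T-values satisfy ∑_{a+b=w, a≥2, b≥1} T(a,b) = 2·( ζ(w) − ζ(w̄) + ζ(v̄,1̄) + ζ(1̄,v̄) − ζ(v̄,1) − ζ(1̄,v) ). -/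
open Filter

/-!
For `m` even and `n < m` odd, partial fractions evaluate the finite sum
`∑_{a=2}^{v} 1 / (m ^ a * n ^ (v + 1 - a))` as
`1 / (n ^ v * (m - n)) - 1 / (m * n ^ v) - 1 / (m ^ v * (m - n))`, where `m - n` is again odd.
Summed over `N ≥ m > n`, the last two terms are nested sums, after the reflection `n ↦ m - n` in
the last one. The first term gives the truncated Cauchy product of the odd parts of `ζ(v)` and
`ζ(1)`. It falls short of the full product of the partial sums, which the stuffle relation expands
into nested sums, by the part `n + j > N`; as `∑ H_n / n ^ v` converges for the harmonic numbers
`H_n`, this part tends to `0` by dominated convergence. So the divergent `ζ(1)` never has to be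
regularised. It remains to write the odd and even parts as half the difference and half the sum of
the terms with signs `1` and `-1`.
-/

open Topology

section NestedSums

variable {R : Type*}

/-- The truncated nested sum `∑_{N ≥ m > n ≥ 1} x m * y n`. -/
def nestedSum [NonUnitalNonAssocSemiring R] (x y : ℕ → R) (N : ℕ) : R :=
  ∑ m ∈ Finset.Icc 1 N, ∑ n ∈ Finset.Ico 1 m, x m * y n

/-- The part `n + j > N` of the product `(∑_{n ≤ N} x n) * (∑_{j ≤ N} y j)`, that is, its excess
over the truncated Cauchy product. -/
def cauchyRemainder [NonUnitalNonAssocSemiring R] (x y : ℕ → R) (N : ℕ) : R :=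
  ∑ n ∈ Finset.Icc 1 N, x n * ∑ j ∈ Finset.Ioc (N - n) N, y j

theorem nestedSum_eq_sum_mul [NonUnitalNonAssocSemiring R] (x y : ℕ → R) (N : ℕ) :
    nestedSum x y N = ∑ m ∈ Finset.Icc 1 N, x m * ∑ n ∈ Finset.Ico 1 m, y n := by
  simp only [nestedSum, Finset.mul_sum]

theorem nestedSum_sub_left [NonUnitalNonAssocRing R] (x x' y : ℕ → R) (N : ℕ) :
    nestedSum (x - x') y N = nestedSum x y N - nestedSum x' y N := by
  simp only [nestedSum, Pi.sub_apply, sub_mul, Finset.sum_sub_distrib]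

theorem nestedSum_sub_right [NonUnitalNonAssocRing R] (x y y' : ℕ → R) (N : ℕ) :
    nestedSum x (y - y') N = nestedSum x y N - nestedSum x y' N := by
  simp only [nestedSum, Pi.sub_apply, mul_sub, Finset.sum_sub_distrib]

theorem nestedSum_add_right [NonUnitalNonAssocSemiring R] (x y y' : ℕ → R) (N : ℕ) :
    nestedSum x (y + y') N = nestedSum x y N + nestedSum x y' N := by
  simp only [nestedSum, Pi.add_apply, mul_add, Finset.sum_add_distrib]

theorem sum_mul_comp_sub_eq_nestedSum [NonUnitalNonAssocSemiring R] (x y : ℕ → R) (N : ℕ) :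
    ∑ m ∈ Finset.Icc 1 N, ∑ n ∈ Finset.Ico 1 m, x m * y (m - n) = nestedSum x y N := by
  refine Finset.sum_congr rfl fun m _ => ?_
  simpa using Finset.sum_Ico_reflect (fun n => x m * y n) 1 (Nat.le_succ m)

theorem sum_mul_sum_eq_nestedSum [CommSemiring R] (x y : ℕ → R) (N : ℕ) :
    (∑ n ∈ Finset.Icc 1 N, x n) * ∑ n ∈ Finset.Icc 1 N, y n
      = nestedSum x y N + nestedSum y x N + ∑ n ∈ Finset.Icc 1 N, x n * y n := by
  induction N with
  | zero => simp [nestedSum]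
  | succ N ih =>
    simp only [nestedSum_eq_sum_mul] at ih ⊢
    simp only [Finset.sum_Icc_succ_top (Nat.le_add_left 1 N), Finset.Ico_add_one_right_eq_Icc]
    rw [add_mul, mul_add, ih]
    ring

theorem sum_Ioc_comp_sub {M : Type*} [AddCommMonoid M] (f : ℕ → M) (n N : ℕ) :
    ∑ m ∈ Finset.Ioc n N, f (m - n) = ∑ j ∈ Finset.Ioc 0 (N - n), f j :=
  Finset.sum_nbij' (· - n) (· + n) (by grind) (by grind) (by grind) (by grind) (by grind)

theorem sum_mul_sum_eq_cauchy_add_cauchyRemainder [NonUnitalNonAssocSemiring R]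
    (x y : ℕ → R) (N : ℕ) :
    (∑ n ∈ Finset.Icc 1 N, x n) * ∑ n ∈ Finset.Icc 1 N, y n
      = ∑ m ∈ Finset.Icc 1 N, ∑ n ∈ Finset.Ico 1 m, x n * y (m - n) + cauchyRemainder x y N := by
  have hswap : ∑ m ∈ Finset.Icc 1 N, ∑ n ∈ Finset.Ico 1 m, x n * y (m - n)
      = ∑ n ∈ Finset.Icc 1 N, ∑ m ∈ Finset.Ioc n N, x n * y (m - n) :=
    Finset.sum_comm' fun m n => by grind
  rw [hswap, cauchyRemainder, ← Finset.sum_add_distrib, Finset.sum_mul]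
  refine Finset.sum_congr rfl fun n _ => ?_
  rw [← Finset.mul_sum, sum_Ioc_comp_sub, ← mul_add,
    Finset.sum_Ioc_consecutive y (Nat.zero_le _) (Nat.sub_le N n)]
  rfl

end NestedSums

section Convergence

theorem sum_Ioc_add_eq_sum_range {M : Type*} [AddCommMonoid M] (f : ℕ → M) (a n : ℕ) :
    ∑ j ∈ Finset.Ioc a (a + n), f j = ∑ i ∈ Finset.range n, f (a + (i + 1)) := by
  rw [← Finset.Ico_add_one_add_one_eq_Ioc, Finset.sum_Ico_eq_sum_range, Nat.add_sub_add_right,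
    Nat.add_sub_cancel_left]
  simp only [add_assoc, add_comm 1]

theorem sum_Icc_one_eq_sum_range {M : Type*} [AddCommMonoid M] (f : ℕ → M) (n : ℕ) :
    ∑ j ∈ Finset.Icc 1 n, f j = ∑ i ∈ Finset.range n, f (i + 1) := by
  simpa [← Finset.Icc_add_one_left_eq_Ioc, add_comm] using sum_Ioc_add_eq_sum_range f 0 n

theorem exists_tendsto_sum_Icc_one {E : Type*} [AddCommGroup E] [TopologicalSpace E]
    [IsTopologicalAddGroup E] {f : ℕ → E} (hf : Summable f) :
    ∃ l, Tendsto (fun N => ∑ n ∈ Finset.Icc 1 N, f n) atTop (𝓝 l) := by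
  simp only [sum_Icc_one_eq_sum_range]
  exact ⟨_, ((summable_nat_add_iff 1).mpr hf).hasSum.tendsto_sum_nat⟩

theorem harmonic_nonneg (n : ℕ) : 0 ≤ (harmonic n : ℝ) :=
  Rat.cast_nonneg.mpr (Finset.sum_nonneg fun i _ => by positivity)

theorem harmonic_le_two_mul_sqrt (n : ℕ) : (harmonic n : ℝ) ≤ 2 * √n := by
  rcases n.eq_zero_or_pos with rfl | hn
  · simp
  · have hlog := Real.log_le_sub_one_of_pos (Real.sqrt_pos.mpr (Nat.cast_pos.mpr hn))
    rw [Real.log_sqrt n.cast_nonneg] at hlog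
    linarith [harmonic_le_one_add_log n]

theorem summable_harmonic_div_sq : Summable fun n : ℕ => (harmonic n : ℝ) / (n : ℝ) ^ 2 := by
  refine Summable.of_nonneg_of_le (fun n => ?_) (fun n => ?_)
    ((Real.summable_one_div_nat_rpow (p := 3 / 2)).mpr (by norm_num) |>.mul_left 2)
  · exact div_nonneg (harmonic_nonneg n) (by positivity)
  · have hsqrt : √(n : ℝ) / (n : ℝ) ^ 2 = 1 / (n : ℝ) ^ (3 / 2 : ℝ) := by
      rcases n.eq_zero_or_pos with rfl | hn
      · simp
      · rw [Real.sqrt_eq_rpow, ← Real.rpow_natCast, ← Real.rpow_sub (Nat.cast_pos.mpr hn),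
          one_div ((n : ℝ) ^ _), ← Real.rpow_neg n.cast_nonneg]
        norm_num
    calc (harmonic n : ℝ) / (n : ℝ) ^ 2 ≤ 2 * √n / (n : ℝ) ^ 2 := by
          gcongr
          exact harmonic_le_two_mul_sqrt n
      _ = 2 * (1 / (n : ℝ) ^ (3 / 2 : ℝ)) := by rw [mul_div_assoc, hsqrt]

variable {x y : ℕ → ℝ}

theorem abs_sum_Ioc_add_le_harmonic (hy : ∀ n : ℕ, |y n| ≤ 1 / n) (a n : ℕ) :
    |∑ j ∈ Finset.Ioc a (a + n), y j| ≤ harmonic n := by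
  rw [sum_Ioc_add_eq_sum_range, harmonic, Rat.cast_sum]
  refine (Finset.abs_sum_le_sum_abs _ _).trans (Finset.sum_le_sum fun i _ => (hy _).trans ?_)
  rw [one_div, Rat.cast_inv, Rat.cast_natCast]
  exact inv_anti₀ (by positivity) (Nat.cast_le.mpr (Nat.le_add_left _ a))

theorem abs_sum_Ico_one_le_harmonic (hy : ∀ n : ℕ, |y n| ≤ 1 / n) (n : ℕ) :
    |∑ j ∈ Finset.Ico 1 n, y j| ≤ harmonic n := by
  cases n with
  | zero => simp
  | succ n =>
    calc |∑ j ∈ Finset.Ico 1 (n + 1), y j| = |∑ j ∈ Finset.Ioc 0 (0 + n), y j| := by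
          rw [Finset.Ico_add_one_right_eq_Icc, zero_add]; rfl
      _ ≤ harmonic n := abs_sum_Ioc_add_le_harmonic hy 0 n
      _ ≤ harmonic (n + 1) := by
          rw [harmonic_succ]
          exact_mod_cast le_add_of_nonneg_right (by positivity)

theorem exists_tendsto_nestedSum (hx : Summable fun n => |x n| * harmonic n)
    (hy : ∀ n : ℕ, |y n| ≤ 1 / n) : ∃ l, Tendsto (nestedSum x y) atTop (𝓝 l) := by
  have hsum : Summable fun m => x m * ∑ n ∈ Finset.Ico 1 m, y n := by
    refine Summable.of_norm_bounded hx fun m => ?_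
    rw [Real.norm_eq_abs, abs_mul]
    gcongr
    exact abs_sum_Ico_one_le_harmonic hy m
  simpa only [funext (nestedSum_eq_sum_mul x y)] using exists_tendsto_sum_Icc_one hsum

theorem tendsto_nestedSum_swap {a b c d : ℝ}
    (hx : Tendsto (fun N => ∑ n ∈ Finset.Icc 1 N, x n) atTop (𝓝 a))
    (hy : Tendsto (fun N => ∑ n ∈ Finset.Icc 1 N, y n) atTop (𝓝 b))
    (hxy : Tendsto (fun N => ∑ n ∈ Finset.Icc 1 N, x n * y n) atTop (𝓝 c))
    (h : Tendsto (nestedSum x y) atTop (𝓝 d)) : Tendsto (nestedSum y x) atTop (𝓝 (a * b - d - c)) :=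
  (((hx.mul hy).sub h).sub hxy).congr fun N => by rw [sum_mul_sum_eq_nestedSum]; ring

theorem tendsto_sum_Ioc_sub {E : Type*} [AddCommMonoid E] [TopologicalSpace E] [ContinuousAdd E]
    {y : ℕ → E} (hy : Tendsto y atTop (𝓝 0)) (n : ℕ) :
    Tendsto (fun N => ∑ j ∈ Finset.Ioc (N - n) N, y j) atTop (𝓝 0) := by
  rw [← tendsto_add_atTop_iff_nat n]
  simp only [Nat.add_sub_cancel, sum_Ioc_add_eq_sum_range]
  simpa using tendsto_finsetSum (Finset.range n) fun i _ =>
    (tendsto_add_atTop_iff_nat (i + 1)).mpr hy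

theorem tendsto_cauchyRemainder (hx : Summable fun n => |x n| * harmonic n)
    (hy : ∀ n : ℕ, |y n| ≤ 1 / n) : Tendsto (cauchyRemainder x y) atTop (𝓝 0) := by
  let F (N : ℕ) : ℕ → ℝ :=
    Set.indicator (Finset.Icc 1 N : Set ℕ) fun n => x n * ∑ j ∈ Finset.Ioc (N - n) N, y j
  have hF : ∀ N, ∑' n, F N n = cauchyRemainder x y N := fun N =>
    (sum_eq_tsum_indicator _ _).symm
  have hy0 : Tendsto y atTop (𝓝 0) :=
    squeeze_zero_norm hy tendsto_one_div_atTop_nhds_zero_nat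
  have hlim : ∀ n, Tendsto (F · n) atTop (𝓝 0) := fun n => by
    have h := (tendsto_sum_Ioc_sub hy0 n).const_mul (x n)
    rw [mul_zero] at h
    exact squeeze_zero_norm (fun N => norm_indicator_le_norm_self _ _)
      (tendsto_zero_iff_norm_tendsto_zero.mp h)
  have hbound : ∀ N n, ‖F N n‖ ≤ |x n| * harmonic n := fun N n => by
    by_cases hn : n ∈ Finset.Icc 1 N
    · obtain ⟨a, rfl⟩ := Nat.exists_eq_add_of_le' (Finset.mem_Icc.mp hn).2
      simp only [F]
      rw [Set.indicator_of_mem (Finset.mem_coe.mpr hn), Real.norm_eq_abs, abs_mul,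
        Nat.add_sub_cancel]
      gcongr
      exact abs_sum_Ioc_add_le_harmonic hy a n
    · simp only [F]
      rw [Set.indicator_of_notMem (Finset.mem_coe.not.mpr hn), norm_zero]
      exact mul_nonneg (abs_nonneg _) (harmonic_nonneg n)
  simpa [hF] using tendsto_tsum_of_dominated_convergence hx hlim (Eventually.of_forall hbound)

theorem one_div_natCast_pow_le_one_div_pow {s t : ℕ} (hst : s ≤ t) (n : ℕ) :
    1 / (n : ℝ) ^ t ≤ 1 / (n : ℝ) ^ s := by
  simp only [one_div, ← inv_pow]
  exact pow_le_pow_of_le_one (by positivity) (Nat.cast_inv_le_one n) hst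

theorem summable_of_abs_le_one_div_pow {s : ℕ} (hs : 2 ≤ s)
    (hx : ∀ n : ℕ, |x n| ≤ 1 / (n : ℝ) ^ s) : Summable x :=
  Summable.of_norm_bounded (Real.summable_one_div_nat_pow.mpr hs) hx

theorem summable_abs_mul_harmonic {s : ℕ} (hs : 2 ≤ s) (hx : ∀ n : ℕ, |x n| ≤ 1 / (n : ℝ) ^ s) :
    Summable fun n => |x n| * harmonic n := by
  refine summable_harmonic_div_sq.of_nonneg_of_le
    (fun n => mul_nonneg (abs_nonneg _) (harmonic_nonneg n)) fun n => ?_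
  rw [div_eq_mul_one_div, mul_comm]
  exact mul_le_mul_of_nonneg_left ((hx n).trans (one_div_natCast_pow_le_one_div_pow hs n))
    (harmonic_nonneg n)

theorem exists_tendsto_nestedSum_of_abs_le_one_div_pow {s t : ℕ} (hs : 2 ≤ s) (ht : 1 ≤ t)
    (hx : ∀ n : ℕ, |x n| ≤ 1 / (n : ℝ) ^ s) (hy : ∀ n : ℕ, |y n| ≤ 1 / (n : ℝ) ^ t) :
    ∃ l, Tendsto (nestedSum x y) atTop (𝓝 l) :=
  exists_tendsto_nestedSum (summable_abs_mul_harmonic hs hx) fun n => by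
    simpa using (hy n).trans (one_div_natCast_pow_le_one_div_pow ht n)

end Convergence

section Terms

/-- The `n`-th term `eⁿ / nˢ` of the depth-1 Euler sum `ζ(s; e)`. -/
noncomputable def eulerTerm (e : ℝ) (s n : ℕ) : ℝ := e ^ n / (n : ℝ) ^ s

/-- The sequence `1 / nˢ` restricted to odd `n`. -/
noncomputable def oddTerm (s n : ℕ) : ℝ := if n % 2 = 1 then 1 / (n : ℝ) ^ s else 0

/-- The sequence `1 / nˢ` restricted to even `n`. -/
noncomputable def evenTerm (s n : ℕ) : ℝ := if n % 2 = 0 then 1 / (n : ℝ) ^ s else 0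

theorem abs_eulerTerm_le {e : ℝ} (he : |e| ≤ 1) (s n : ℕ) :
    |eulerTerm e s n| ≤ 1 / (n : ℝ) ^ s := by
  rw [eulerTerm, abs_div, abs_pow, abs_pow, Nat.abs_cast]
  gcongr
  exact pow_le_one₀ (abs_nonneg e) he

theorem abs_oddTerm_le (s n : ℕ) : |oddTerm s n| ≤ 1 / (n : ℝ) ^ s := by
  unfold oddTerm
  split_ifs
  · rw [abs_of_nonneg (by positivity)]
  · rw [abs_zero]
    positivity

theorem abs_evenTerm_le (s n : ℕ) : |evenTerm s n| ≤ 1 / (n : ℝ) ^ s := by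
  unfold evenTerm
  split_ifs
  · rw [abs_of_nonneg (by positivity)]
  · rw [abs_zero]
    positivity

theorem eulerTerm_mul_eulerTerm (e f : ℝ) (s t n : ℕ) :
    eulerTerm e s n * eulerTerm f t n = eulerTerm (e * f) (s + t) n := by
  simp only [eulerTerm, mul_pow, pow_add, div_mul_div_comm]

theorem oddTerm_mul_oddTerm (s t n : ℕ) : oddTerm s n * oddTerm t n = oddTerm (s + t) n := by
  simp only [oddTerm, pow_add]
  split_ifs <;> ring

theorem eulerTerm_one (s : ℕ) : eulerTerm 1 s = evenTerm s + oddTerm s := by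
  funext n
  rcases Nat.mod_two_eq_zero_or_one n with h | h <;> simp [eulerTerm, evenTerm, oddTerm, h]

theorem eulerTerm_neg_one (s : ℕ) : eulerTerm (-1) s = evenTerm s - oddTerm s := by
  funext n
  rcases Nat.even_or_odd n with h | h
  · simp [eulerTerm, evenTerm, oddTerm, h.neg_one_pow, Nat.even_iff.mp h]
  · simp [eulerTerm, evenTerm, oddTerm, h.neg_one_pow, Nat.odd_iff.mp h, neg_div]

end Terms

section Limits

theorem nestedSum_eulerTerm (s t : ℕ) (e f : ℝ) (N : ℕ) :
    nestedSum (eulerTerm e s) (eulerTerm f t) N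
      = ∑ n₁ ∈ Finset.Icc 1 N, ∑ n₂ ∈ Finset.Ico 1 n₁,
          e ^ n₁ * f ^ n₂ / ((n₁ : ℝ) ^ s * (n₂ : ℝ) ^ t) := by
  simp only [nestedSum, eulerTerm, div_mul_div_comm]

theorem four_mul_nestedSum_evenTerm_oddTerm (s t N : ℕ) :
    4 * nestedSum (evenTerm s) (oddTerm t) N
      = ∑ m₁ ∈ Finset.Icc 1 N, ∑ m₂ ∈ Finset.Ico 1 m₁,
          if m₁ % 2 = 0 ∧ m₂ % 2 = 1 then 4 / ((m₁ : ℝ) ^ s * (m₂ : ℝ) ^ t) else 0 := by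
  simp only [nestedSum, evenTerm, oddTerm, ite_zero_mul_ite_zero, one_div_mul_one_div]
  simp only [Finset.mul_sum, mul_ite, mul_zero, mul_one_div]

variable {s t : ℕ} {e f : ℝ}

theorem tendsto_eulerSum1 (hs : 2 ≤ s) (he : |e| ≤ 1) :
    Tendsto (fun N => ∑ n ∈ Finset.Icc 1 N, eulerTerm e s n) atTop (𝓝 (eulerSum1 s e)) :=
  tendsto_nhds_limUnder <| exists_tendsto_sum_Icc_one <|
    summable_of_abs_le_one_div_pow hs (abs_eulerTerm_le he s)

theorem tendsto_eulerSum2_of_exists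
    (h : ∃ l, Tendsto (nestedSum (eulerTerm e s) (eulerTerm f t)) atTop (𝓝 l)) :
    Tendsto (nestedSum (eulerTerm e s) (eulerTerm f t)) atTop (𝓝 (eulerSum2 s t e f)) := by
  simpa only [eulerSum2, ← nestedSum_eulerTerm] using tendsto_nhds_limUnder h

theorem tendsto_eulerSum2 (hs : 2 ≤ s) (ht : 1 ≤ t) (he : |e| ≤ 1) (hf : |f| ≤ 1) :
    Tendsto (nestedSum (eulerTerm e s) (eulerTerm f t)) atTop (𝓝 (eulerSum2 s t e f)) :=
  tendsto_eulerSum2_of_exists <| exists_tendsto_nestedSum_of_abs_le_one_div_pow hs ht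
    (abs_eulerTerm_le he s) (abs_eulerTerm_le hf t)

theorem tendsto_tValue2 (hs : 2 ≤ s) (ht : 1 ≤ t) :
    Tendsto (fun N => 4 * nestedSum (evenTerm s) (oddTerm t) N) atTop (𝓝 (tValue2 s t)) := by
  obtain ⟨l, hl⟩ := exists_tendsto_nestedSum_of_abs_le_one_div_pow hs ht
    (abs_evenTerm_le s) (abs_oddTerm_le t)
  simpa only [tValue2, ← four_mul_nestedSum_evenTerm_oddTerm] using
    tendsto_nhds_limUnder ⟨_, hl.const_mul 4⟩

theorem exists_tendsto_sum_eulerTerm_neg_one_one :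
    ∃ l, Tendsto (fun N => ∑ n ∈ Finset.Icc 1 N, eulerTerm (-1) 1 n) atTop (𝓝 l) := by
  have hanti : Antitone fun i : ℕ => 1 / ((i : ℝ) + 1) := fun _ _ => Nat.one_div_le_one_div
  obtain ⟨l, hl⟩ := hanti.tendsto_alternating_series_of_tendsto_zero
    tendsto_one_div_add_atTop_nhds_zero_nat
  refine ⟨-l, hl.neg.congr fun N => ?_⟩
  rw [sum_Icc_one_eq_sum_range, ← Finset.sum_neg_distrib]
  refine Finset.sum_congr rfl fun i _ => ?_
  rw [eulerTerm, pow_one, Nat.cast_add_one]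
  ring

/-- The outer sum over `1̄` converges only conditionally; the stuffle product reduces it to the
summable `ζ(t; f)`, the alternating series, and `ζ(t, 1̄)`. -/
theorem tendsto_eulerSum2_one_left (ht : 2 ≤ t) (hf : |f| ≤ 1) :
    Tendsto (nestedSum (eulerTerm (-1) 1) (eulerTerm f t)) atTop (𝓝 (eulerSum2 1 t (-1) f)) := by
  obtain ⟨l, hl⟩ := exists_tendsto_sum_eulerTerm_neg_one_one
  have hprod := tendsto_eulerSum1 (s := t + 1) (e := f * -1) (by omega) (by simpa using hf)
  simp only [← eulerTerm_mul_eulerTerm] at hprod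
  exact tendsto_eulerSum2_of_exists ⟨_, tendsto_nestedSum_swap (tendsto_eulerSum1 ht hf) hl
    hprod (tendsto_eulerSum2 ht le_rfl hf (by simp))⟩

end Limits

section TruncatedSumFormula

theorem sum_Icc_one_div_pow_mul_one_div_pow {K : Type*} [Field K] {x y : K} (hx : x ≠ 0)
    (hy : y ≠ 0) (hxy : x ≠ y) {v : ℕ} (hv : 1 ≤ v) :
    ∑ a ∈ Finset.Icc 2 v, 1 / x ^ a * (1 / y ^ (v + 1 - a))
      = 1 / y ^ v * (1 / (x - y)) - 1 / x * (1 / y ^ v) - 1 / x ^ v * (1 / (x - y)) := by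
  have hsub : x - y ≠ 0 := sub_ne_zero.mpr hxy
  induction v, hv using Nat.le_induction with
  | base =>
    simp only [Nat.reduceLT, Finset.Icc_eq_empty_of_lt, Finset.sum_empty, pow_one]
    field_simp
    ring
  | succ v hv ih =>
    have hstep : ∑ a ∈ Finset.Icc 2 v, 1 / x ^ a * (1 / y ^ (v + 1 + 1 - a))
        = (∑ a ∈ Finset.Icc 2 v, 1 / x ^ a * (1 / y ^ (v + 1 - a))) * (1 / y) := by
      rw [Finset.sum_mul]
      refine Finset.sum_congr rfl fun a ha => ?_
      rw [Nat.sub_add_comm (by grind), pow_succ, one_div_mul_one_div_rev]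
      field_simp
    rw [Finset.sum_Icc_succ_top (by omega), hstep, ih, Nat.add_sub_cancel_left]
    field_simp
    ring

theorem sum_evenTerm_mul_oddTerm {v m n : ℕ} (hv : 1 ≤ v) (hn : 1 ≤ n) (hnm : n < m) :
    ∑ a ∈ Finset.Icc 2 v, evenTerm a m * oddTerm (v + 1 - a) n
      = oddTerm v n * oddTerm 1 (m - n) - evenTerm 1 m * oddTerm v n
        - evenTerm v m * oddTerm 1 (m - n) := by
  by_cases hparity : m % 2 = 0 ∧ n % 2 = 1
  · obtain ⟨hm2, hn2⟩ := hparity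
    have hmn2 : (m - n) % 2 = 1 := by omega
    simp only [evenTerm, oddTerm, hm2, hn2, hmn2, if_true, pow_one, Nat.cast_sub hnm.le]
    exact sum_Icc_one_div_pow_mul_one_div_pow (Nat.cast_ne_zero.mpr (by omega))
      (Nat.cast_ne_zero.mpr (by omega)) (Nat.cast_injective.ne hnm.ne') hv
  · have hzero : ∀ a, evenTerm a m * oddTerm (v + 1 - a) n = 0 := fun a => by
      simp only [evenTerm, oddTerm, ite_zero_mul_ite_zero, if_neg hparity]
    simp only [hzero, Finset.sum_const_zero]
    unfold evenTerm oddTerm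
    split_ifs <;> first | omega | simp

theorem sum_nestedSum_evenTerm_oddTerm {v : ℕ} (hv : 1 ≤ v) (N : ℕ) :
    ∑ a ∈ Finset.Icc 2 v, nestedSum (evenTerm a) (oddTerm (v + 1 - a)) N
      = ∑ n ∈ Finset.Icc 1 N, oddTerm (v + 1) n
        + nestedSum (oddTerm v) (oddTerm 1) N + nestedSum (oddTerm 1) (oddTerm v) N
        - nestedSum (evenTerm 1) (oddTerm v) N - nestedSum (evenTerm v) (oddTerm 1) N
        - cauchyRemainder (oddTerm v) (oddTerm 1) N := by
  have hpair : ∑ a ∈ Finset.Icc 2 v, nestedSum (evenTerm a) (oddTerm (v + 1 - a)) N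
      = ∑ m ∈ Finset.Icc 1 N, ∑ n ∈ Finset.Ico 1 m, oddTerm v n * oddTerm 1 (m - n)
        - nestedSum (evenTerm 1) (oddTerm v) N - nestedSum (evenTerm v) (oddTerm 1) N := by
    rw [← sum_mul_comp_sub_eq_nestedSum (evenTerm v)]
    simp only [nestedSum, ← Finset.sum_sub_distrib]
    rw [Finset.sum_comm]
    refine Finset.sum_congr rfl fun m _ => ?_
    rw [Finset.sum_comm]
    refine Finset.sum_congr rfl fun n hn => ?_
    exact sum_evenTerm_mul_oddTerm hv (Finset.mem_Ico.mp hn).1 (Finset.mem_Ico.mp hn).2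
  have hstuffle := sum_mul_sum_eq_nestedSum (oddTerm v) (oddTerm 1) N
  have hcauchy := sum_mul_sum_eq_cauchy_add_cauchyRemainder (oddTerm v) (oddTerm 1) N
  simp only [oddTerm_mul_oddTerm] at hstuffle
  linarith

theorem sum_four_mul_nestedSum_evenTerm_oddTerm {v : ℕ} (hv : 1 ≤ v) (N : ℕ) :
    ∑ a ∈ Finset.Icc 2 v, 4 * nestedSum (evenTerm a) (oddTerm (v + 1 - a)) N
      = 2 * (∑ n ∈ Finset.Icc 1 N, eulerTerm 1 (v + 1) n
          - ∑ n ∈ Finset.Icc 1 N, eulerTerm (-1) (v + 1) n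
          + nestedSum (eulerTerm (-1) v) (eulerTerm (-1) 1) N
          + nestedSum (eulerTerm (-1) 1) (eulerTerm (-1) v) N
          - nestedSum (eulerTerm (-1) v) (eulerTerm 1 1) N
          - nestedSum (eulerTerm (-1) 1) (eulerTerm 1 v) N)
        - 4 * cauchyRemainder (oddTerm v) (oddTerm 1) N := by
  simp only [eulerTerm_one, eulerTerm_neg_one, nestedSum_sub_left, nestedSum_sub_right,
    nestedSum_add_right, Pi.add_apply, Pi.sub_apply, Finset.sum_add_distrib,
    Finset.sum_sub_distrib, ← Finset.mul_sum, sum_nestedSum_evenTerm_oddTerm hv]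
  ring

end TruncatedSumFormula

/-- Sum formula for double T-values: for `w ≥ 3`, with `v = w − 1`,
`∑_{a+b=w, a≥2} T(a,b) = 2(ζ(w) − ζ(w̄) + ζ(v̄,1̄) + ζ(1̄,v̄) − ζ(v̄,1) − ζ(1̄,v))`. -/
theorem sum_double_T (w : ℕ) (hw : 3 ≤ w) :
    ∑ a ∈ Finset.Icc 2 (w - 1), tValue2 a (w - a)
      = 2 * (eulerSum1 w 1 - eulerSum1 w (-1)
          + eulerSum2 (w - 1) 1 (-1) (-1) + eulerSum2 1 (w - 1) (-1) (-1)
          - eulerSum2 (w - 1) 1 (-1) 1 - eulerSum2 1 (w - 1) (-1) 1) := by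
  obtain ⟨v, rfl⟩ : ∃ v, w = v + 1 := ⟨w - 1, by omega⟩
  have hv : 2 ≤ v := by omega
  rw [Nat.add_sub_cancel]
  have hneg : |(-1 : ℝ)| ≤ 1 := by simp
  have hT := tendsto_finsetSum (Finset.Icc 2 v) fun a ha =>
    tendsto_tValue2 (s := a) (t := v + 1 - a) (by grind) (by grind)
  have hζ := ((((((tendsto_eulerSum1 (s := v + 1) (by omega) abs_one.le).sub
    (tendsto_eulerSum1 (s := v + 1) (by omega) hneg)).add
    (tendsto_eulerSum2 hv le_rfl hneg hneg)).add
    (tendsto_eulerSum2_one_left hv hneg)).sub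
    (tendsto_eulerSum2 hv le_rfl hneg abs_one.le)).sub
    (tendsto_eulerSum2_one_left hv abs_one.le)).const_mul 2
  have hR : Tendsto (fun N => 4 * cauchyRemainder (oddTerm v) (oddTerm 1) N) atTop (𝓝 0) := by
    simpa using (tendsto_cauchyRemainder (summable_abs_mul_harmonic hv (abs_oddTerm_le v))
      (by simpa using abs_oddTerm_le 1)).const_mul 4
  simp only [sum_four_mul_nestedSum_evenTerm_oddTerm (one_le_two.trans hv)] at hT
  exact tendsto_nhds_unique hT (by simpa only [sub_zero] using hζ.sub hR)
end
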